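/- arXiv:1303.0503 — 3 statements merged into one kernel-verified Lean document; each statement's English description precedes it below -/
import Mathlib

section
/- Let p = 3 and q = 3^m where m ≥ 6 is an even integer, and let π be a generator of the multiplicative group F_q^×. For (α,β,γ) ∈ F_q³ ∖ {(0,0,0)} let w(α,β,γ) = #{ i ∈ {0,1,…,q−2} : Tr(α·π^{2i} + β·π^{4i} + γ·π^{10i}) ≠ 0 } be the Hamming weight of the corresponding codeword of the cyclic code of length q−1 with nonzeros π^{−2}, π^{−4}, π^{−10}. Then: the number of triples (α,β,γ) ∈ F_q³ ∖ {(0,0,0)} with w(α,β,γ) = 2·3^{m−1} equals n_{1,1} + n_{−1,1} + n_{1,3} + n_{−1,3}; and for each j ∈ {0,2,4}, the number of such triples with w(α,β,γ) = 2·3^{m−1} − 2·3^{(m+j)/2 − 1} equals n_{1,j}, and the number with w(α,β,γ) = 2·3^{m−1} + 2·3^{(m+j)/2 − 1} equals n_{−1,j}. -/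
open Complex Finset

noncomputable def zetaPow (p : ℕ) (a : ZMod p) : ℂ :=
  Complex.exp (2 * Real.pi * Complex.I * (a.val : ℂ) / (p : ℂ))

noncomputable def expSum (p m : ℕ) [Fact p.Prime]
    (α β γ : GaloisField p m) : ℂ :=
  letI : Fintype (GaloisField p m) := Fintype.ofFinite _
  ∑ x : GaloisField p m,
    zetaPow p ((Algebra.trace (ZMod p) (GaloisField p m))
      (α * x ^ 2 + β * x ^ (p + 1) + γ * x ^ (p ^ 2 + 1)))

noncomputable def nval (p m : ℕ) (ε : ℤ) (j : ℕ) : ℂ :=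
  if j % 2 = 0 then (ε : ℂ) * ((Real.sqrt ((p : ℝ) ^ (m + j)) : ℝ) : ℂ)
  else (ε : ℂ) * Complex.I * ((Real.sqrt ((p : ℝ) ^ (m + j)) : ℝ) : ℂ)

noncomputable def nn (p m : ℕ) [Fact p.Prime] (ε : ℤ) (j : ℕ) : ℕ :=
  {t : GaloisField p m × GaloisField p m × GaloisField p m |
    t ≠ (0, 0, 0) ∧ expSum p m t.1 t.2.1 t.2.2 = nval p m ε j}.ncard

namespace TernaryQuadratic

theorem sum_stdAddChar_comp {G : Type*} [AddCommGroup G] [Fintype G] (φ : G →+ ZMod 3)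
    [Decidable (φ = 0)] :
    ∑ y, ZMod.stdAddChar (φ y) = if φ = 0 then (Fintype.card G : ℂ) else 0 := by
  split_ifs with h
  · simp [h]
  · refine AddChar.sum_eq_zero_of_ne_one
      (ψ := (ZMod.stdAddChar (N := 3)).compAddMonoidHom φ) fun h1 => h ?_
    ext y
    have := DFunLike.congr_fun h1 y
    rw [AddChar.compAddMonoidHom_apply, AddChar.one_apply,
      ← AddChar.map_zero_eq_one (ZMod.stdAddChar (N := 3))] at this
    exact ZMod.injective_stdAddChar this

section Field

variable {F : Type*} [Field F] [Algebra (ZMod 3) F]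

instance charP_three : CharP F 3 := charP_of_injective_algebraMap (algebraMap (ZMod 3) F).injective 3

theorem add_pow_three (x y : F) : (x + y) ^ 3 = x ^ 3 + y ^ 3 := add_pow_char _ _ _

theorem add_pow_nine (x y : F) : (x + y) ^ 9 = x ^ 9 + y ^ 9 :=
  add_pow_char_pow (p := 3) (n := 2) _ _

/-- The quadratic form `Tr(αx² + βx⁴ + γx¹⁰)` over `𝔽₃`. -/
noncomputable def form (α β γ x : F) : ZMod 3 :=
  Algebra.trace (ZMod 3) F (α * x ^ 2 + β * x ^ 4 + γ * x ^ 10)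

theorem form_zero (α β γ : F) : form α β γ 0 = 0 := by simp [form]

theorem form_neg (α β γ x : F) : form α β γ (-x) = form α β γ x := by
  simp only [form, Even.neg_pow (show Even 2 by decide), Even.neg_pow (show Even 4 by decide),
    Even.neg_pow (show Even 10 by decide)]

/-- The polar form of `form α β γ`. -/
noncomputable def polar (α β γ : F) : F →+ F →+ ZMod 3 :=
  AddMonoidHom.mk' (fun u => AddMonoidHom.mk' (fun y => Algebra.trace (ZMod 3) F
      (2 * α * u * y + β * (u ^ 3 * y + u * y ^ 3) + γ * (u ^ 9 * y + u * y ^ 9)))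
      (fun y z => by rw [← map_add, add_pow_three, add_pow_nine]; congr 1; ring))
    (fun u v => by
      ext y
      simp only [AddMonoidHom.mk'_apply, AddMonoidHom.add_apply]
      rw [← map_add, add_pow_three, add_pow_nine]; congr 1; ring)

theorem polar_apply (α β γ u y : F) : polar α β γ u y = Algebra.trace (ZMod 3) F
    (2 * α * u * y + β * (u ^ 3 * y + u * y ^ 3) + γ * (u ^ 9 * y + u * y ^ 9)) := rfl

theorem form_add (α β γ u y : F) :
    form α β γ (u + y) = form α β γ u + form α β γ y + polar α β γ u y := by
  rw [polar_apply, form, form, form, ← map_add, ← map_add]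
  congr 1
  rw [show (u + y) ^ 4 = (u + y) ^ 3 * (u + y) by ring,
    show (u + y) ^ 10 = (u + y) ^ 9 * (u + y) by ring, add_pow_three, add_pow_nine]
  ring

theorem form_eq_zero_of_mem_ker {α β γ u : F} (hu : u ∈ (polar α β γ).ker) :
    form α β γ u = 0 := by
  have h := form_add α β γ u (-u)
  rw [(AddMonoidHom.mem_ker).1 hu, AddMonoidHom.zero_apply, form_neg, add_neg_cancel, form_zero] at h
  generalize form α β γ u = c at h
  revert c; decide

variable [Fintype F]

theorem trace_pow_three (x : F) :
    Algebra.trace (ZMod 3) F (x ^ 3) = Algebra.trace (ZMod 3) F x := by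
  have h := Algebra.trace_eq_of_algEquiv
    (FiniteField.frobeniusAlgEquivOfAlgebraic (ZMod 3) F) x
  simpa [FiniteField.coe_frobeniusAlgEquivOfAlgebraic, ZMod.card] using h

theorem trace_pow_nine (x : F) :
    Algebra.trace (ZMod 3) F (x ^ 9) = Algebra.trace (ZMod 3) F x := by
  rw [show x ^ 9 = (x ^ 3) ^ 3 by ring, trace_pow_three, trace_pow_three]

open Polynomial in
theorem card_ker_polar_le {α β γ : F} (h : (α, β, γ) ≠ (0, 0, 0)) :
    Nat.card (polar α β γ).ker ≤ 81 := by
  classical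
  set P : F[X] := C (γ ^ 9) * X ^ 81 + C (β ^ 9) * X ^ 27 + C (2 * α ^ 9) * X ^ 9
    + C (β ^ 3) * X ^ 3 + C γ * X with hP
  have h2 : (2 : F) ≠ 0 := by
    intro h0
    have : (1 : F) = 3 - 2 := by norm_num
    rw [h0, show (3 : F) = 0 from mod_cast CharP.cast_eq_zero F 3] at this
    simp at this
  have hP0 : P ≠ 0 := by
    intro h0
    have h81 : P.coeff 81 = γ ^ 9 := by
      simp [hP, coeff_X_pow, coeff_C_mul, -map_mul, -map_pow]
    have h27 : P.coeff 27 = β ^ 9 := by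
      simp [hP, coeff_X_pow, coeff_C_mul, -map_mul, -map_pow]
    have h9 : P.coeff 9 = 2 * α ^ 9 := by
      simp [hP, coeff_X_pow, coeff_C_mul, -map_mul, -map_pow]
    rw [h0, coeff_zero, eq_comm] at h81 h27 h9
    apply h
    simp_all
  have hdeg : P.natDegree ≤ 81 := by
    rw [hP]; compute_degree
  have hsub : ((polar α β γ).ker : Set F) ⊆ (P.roots.toFinset : Set F) := by
    intro u hu
    simp only [SetLike.mem_coe, AddMonoidHom.mem_ker] at hu
    simp only [Finset.mem_coe, Multiset.mem_toFinset, mem_roots hP0, IsRoot.def]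
    refine (traceForm_nondegenerate (ZMod 3) F).1 _ fun y => ?_
    obtain ⟨z, rfl⟩ : ∃ z : F, z ^ 9 = y := by
      obtain ⟨a, rfl⟩ := (FiniteField.frobeniusAlgEquivOfAlgebraic (ZMod 3) F).surjective y
      obtain ⟨b, rfl⟩ := (FiniteField.frobeniusAlgEquivOfAlgebraic (ZMod 3) F).surjective a
      exact ⟨b, by simp [ZMod.card, ← pow_mul]⟩
    have hz := DFunLike.congr_fun hu z
    rw [polar_apply, AddMonoidHom.zero_apply] at hz
    rw [Algebra.traceForm_apply, ← hz]
    have e1 := trace_pow_nine (α * u * z)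
    have e2 := trace_pow_nine (β * u ^ 3 * z)
    have e3 := trace_pow_three (β * u * z ^ 3)
    have e4 := trace_pow_nine (γ * u ^ 9 * z)
    rw [show eval u P * z ^ 9 = (γ * u ^ 9 * z) ^ 9 + (β * u ^ 3 * z) ^ 9
        + ((α * u * z) ^ 9 + (α * u * z) ^ 9) + (β * u * z ^ 3) ^ 3 + γ * u * z ^ 9 by
        simp [hP]; ring,
      show 2 * α * u * z + β * (u ^ 3 * z + u * z ^ 3) + γ * (u ^ 9 * z + u * z ^ 9)
        = γ * u ^ 9 * z + β * u ^ 3 * z + (α * u * z + α * u * z) + β * u * z ^ 3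
          + γ * u * z ^ 9 by ring]
    simp only [map_add, e1, e2, e3, e4]
  calc Nat.card (polar α β γ).ker = ((polar α β γ).ker : Set F).ncard := rfl
    _ ≤ (P.roots.toFinset : Set F).ncard := Set.ncard_le_ncard hsub
    _ = P.roots.toFinset.card := Set.ncard_coe_finset _
    _ ≤ P.roots.card := Multiset.toFinset_card_le _
    _ ≤ 81 := (card_roots' P).trans hdeg

theorem card_ker_polar_eq {m : ℕ} (hF : Fintype.card F = 3 ^ m) {α β γ : F}
    (h : (α, β, γ) ≠ (0, 0, 0)) : ∃ j ≤ 4, Nat.card (polar α β γ).ker = 3 ^ j := by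
  have hd := AddSubgroup.card_addSubgroup_dvd_card (polar α β γ).ker
  rw [Nat.card_eq_fintype_card (α := F), hF, Nat.dvd_prime_pow Nat.prime_three] at hd
  obtain ⟨j, -, hj⟩ := hd
  refine ⟨j, ?_, hj⟩
  have := card_ker_polar_le h
  rw [hj] at this
  exact (Nat.pow_le_pow_iff_right (by norm_num : 1 < 3)).1 (this.trans_eq (by norm_num))

theorem normSq_sum (α β γ : F) :
    Complex.normSq (∑ x, ZMod.stdAddChar (form α β γ x)) =
      Fintype.card F * Nat.card (polar α β γ).ker := by
  classical
  have key : (Complex.normSq (∑ x, ZMod.stdAddChar (form α β γ x)) : ℂ) =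
      (Fintype.card F : ℂ) * Nat.card (polar α β γ).ker := by
    rw [← Complex.mul_conj, map_sum, Finset.sum_mul_sum, Finset.sum_comm]
    calc _ = ∑ y, ∑ u, ZMod.stdAddChar (form α β γ u) *
          ZMod.stdAddChar (polar α β γ u y) := by
          refine Finset.sum_congr rfl fun y _ => ?_
          rw [← Equiv.sum_comp (Equiv.addRight y)]
          refine Finset.sum_congr rfl fun u _ => ?_
          rw [← AddChar.map_neg_eq_conj, ← AddChar.map_add_eq_mul, ← AddChar.map_add_eq_mul,
            Equiv.coe_addRight, form_add]
          congr 1; ring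
      _ = ∑ u, if polar α β γ u = 0 then (Fintype.card F : ℂ) else 0 := by
          rw [Finset.sum_comm]
          refine Finset.sum_congr rfl fun u _ => ?_
          rw [← Finset.mul_sum, sum_stdAddChar_comp]
          split_ifs with h
          · rw [form_eq_zero_of_mem_ker (AddMonoidHom.mem_ker.2 h), AddChar.map_zero_eq_one, one_mul]
          · simp
      _ = _ := by
          rw [← Finset.sum_filter, Finset.sum_const, nsmul_eq_mul, mul_comm,
            Nat.card_eq_fintype_card, Fintype.card_subtype]
          simp [AddMonoidHom.mem_ker]
  exact_mod_cast key

theorem even_card_form_eq (α β γ : F) {c : ZMod 3} (hc : c ≠ 0) :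
    Even (Finset.univ.filter fun x => form α β γ x = c).card := by
  rw [← ZMod.natCast_eq_zero_iff_even, Finset.card_eq_sum_ones, Nat.cast_sum]
  refine Finset.sum_involution (fun x _ => -x) (fun _ _ => by decide) ?_ ?_ (by simp)
  · intro x hx _ hxx
    have h0 : x = 0 := by
      have h3 : (3 : F) = 0 := mod_cast CharP.cast_eq_zero F 3
      linear_combination x * h3 + hxx
    simp only [Finset.mem_filter, h0, form_zero] at hx
    exact hc hx.2.symm
  · intro x hx
    simpa [form_neg] using hx

theorem stdAddChar_one :
    ZMod.stdAddChar (1 : ZMod 3) = -1 / 2 + (√3 : ℝ) / 2 * Complex.I := by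
  have h := ZMod.stdAddChar_coe (N := 3) 1
  rw [Int.cast_one] at h
  rw [h, show (2 * Real.pi * Complex.I * (1 : ℤ) / (3 : ℕ) : ℂ) =
      ((Real.pi - Real.pi / 3 : ℝ) : ℂ) * Complex.I by push_cast; ring, Complex.exp_mul_I,
    ← Complex.ofReal_cos, ← Complex.ofReal_sin, Real.cos_pi_sub, Real.sin_pi_sub,
    Real.cos_pi_div_three, Real.sin_pi_div_three]
  push_cast; ring

theorem stdAddChar_two :
    ZMod.stdAddChar (2 : ZMod 3) = -1 / 2 - (√3 : ℝ) / 2 * Complex.I := by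
  rw [show (2 : ZMod 3) = -1 by decide, AddChar.map_neg_eq_conj, stdAddChar_one]
  simp only [map_add, map_mul, map_div₀, map_neg, map_one, Complex.conj_ofReal, Complex.conj_I,
    map_ofNat]
  ring

theorem exists_sum_eq (α β γ : F) : ∃ A D : ℤ,
    ∑ x, ZMod.stdAddChar (form α β γ x) = (A : ℂ) + D * (√3 : ℝ) * Complex.I ∧
    (3 * (Finset.univ.filter fun x => form α β γ x ≠ 0).card : ℤ) =
      2 * (Fintype.card F - A) := by
  classical
  obtain ⟨b, hb⟩ := even_card_form_eq α β γ (c := 1) (by decide)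
  obtain ⟨c, hc⟩ := even_card_form_eq α β γ (c := 2) (by decide)
  set N : ZMod 3 → ℕ := fun c => (Finset.univ.filter fun x => form α β γ x = c).card with hN
  have hq : Fintype.card F = N 0 + N 1 + N 2 := by
    have := Finset.card_eq_sum_card_fiberwise (s := (Finset.univ : Finset F))
      (t := Finset.univ) (f := form α β γ) (by simp)
    rw [Finset.card_univ] at this
    rw [this]; exact Fin.sum_univ_three _
  have hw : N 0 + (Finset.univ.filter fun x => form α β γ x ≠ 0).card = Fintype.card F :=
    Finset.card_filter_add_card_filter_not _
  have hS : ∑ x, ZMod.stdAddChar (form α β γ x) = (N 0 : ℂ) * ZMod.stdAddChar (0 : ZMod 3)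
      + N 1 * ZMod.stdAddChar (1 : ZMod 3) + N 2 * ZMod.stdAddChar (2 : ZMod 3) := by
    rw [← Finset.sum_fiberwise_of_maps_to (s := Finset.univ) (t := Finset.univ)
      (g := form α β γ) (by simp)]
    trans ∑ c, (N c : ℂ) * ZMod.stdAddChar c
    · refine Finset.sum_congr rfl fun c _ => ?_
      rw [Finset.sum_congr rfl (g := fun _ => ZMod.stdAddChar c)
        (fun x hx => by rw [(Finset.mem_filter.1 hx).2])]
      simp [hN]
    · exact Fin.sum_univ_three _
  change N 1 = _ at hb
  change N 2 = _ at hc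
  refine ⟨Fintype.card F - 3 * (b + c), b - c, ?_, ?_⟩
  · rw [hS, AddChar.map_zero_eq_one, stdAddChar_one, stdAddChar_two, hq, hb, hc]
    push_cast; ring
  · omega

end Field

theorem sq_add_three_mul_sq_eq_pow (k : ℕ) (A D : ℤ) (h : A ^ 2 + 3 * D ^ 2 = 3 ^ k) :
    (Even k → D = 0 ∧ (A = 3 ^ (k / 2) ∨ A = -3 ^ (k / 2))) ∧
    (Odd k → A = 0 ∧ (D = 3 ^ (k / 2) ∨ D = -3 ^ (k / 2))) := by
  induction k generalizing A D with
  | zero =>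
    have hD : D = 0 := by
      by_contra hD
      have := Int.one_le_abs hD
      nlinarith [sq_abs D, sq_nonneg A]
    subst hD
    simpa using h
  | succ k ih =>
    have hdvd : (3 : ℤ) ∣ A := by
      refine Int.prime_three.dvd_of_dvd_pow (n := 2) ⟨3 ^ k - D ^ 2, ?_⟩
      rw [pow_succ 3 k] at h; linarith
    obtain ⟨B, rfl⟩ := hdvd
    have := ih D B (by rw [pow_succ 3 k] at h; linarith)
    constructor
    · intro hk
      obtain ⟨h1, h2⟩ := this.2 (by simpa [Nat.even_add_one] using hk)
      refine ⟨h1, ?_⟩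
      have e : (k + 1) / 2 = k / 2 + 1 := by rw [Nat.even_iff] at hk; omega
      rw [e, pow_succ]
      rcases h2 with rfl | rfl
      · left; ring
      · right; ring
    · intro hk
      obtain ⟨h1, h2⟩ := this.1 (by simpa [Nat.odd_add_one] using hk)
      have e : (k + 1) / 2 = k / 2 := by rw [Nat.odd_iff] at hk; omega
      rw [e]
      exact ⟨by simp [h1], h2⟩

theorem sqrt_three_pow_even {k : ℕ} (hk : Even k) : √((3 : ℝ) ^ k) = 3 ^ (k / 2) := by
  rw [Real.sqrt_eq_iff_mul_self_eq (by positivity) (by positivity), ← pow_add]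
  congr 1; rw [Nat.even_iff] at hk; omega

theorem sqrt_three_pow_odd {k : ℕ} (hk : Odd k) : √((3 : ℝ) ^ k) = 3 ^ (k / 2) * √3 := by
  obtain ⟨l, rfl⟩ := hk
  rw [pow_succ, Real.sqrt_mul (by positivity), sqrt_three_pow_even (by simp)]
  congr 2; omega

theorem add_mul_sqrt_three_mul_I_inj {A B D E : ℤ} :
    (A : ℂ) + D * (√3 : ℝ) * Complex.I = (B : ℂ) + E * (√3 : ℝ) * Complex.I ↔
      A = B ∧ D = E := by
  have h3 : √3 ≠ 0 := by positivity
  simp [Complex.ext_iff, h3]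

theorem eq_nval_iff_even {m j : ℕ} (hm : Even m) (hj : Even j) (A D ε : ℤ) :
    (A : ℂ) + D * (√3 : ℝ) * Complex.I = nval 3 m ε j ↔ A = ε * 3 ^ ((m + j) / 2) ∧ D = 0 := by
  rw [nval, if_pos (Nat.even_iff.1 hj), Nat.cast_ofNat, sqrt_three_pow_even (hm.add hj),
    ← add_mul_sqrt_three_mul_I_inj]
  push_cast
  rw [zero_mul, zero_mul, add_zero]

theorem eq_nval_iff_odd {m j : ℕ} (hm : Even m) (hj : Odd j) (A D ε : ℤ) :
    (A : ℂ) + D * (√3 : ℝ) * Complex.I = nval 3 m ε j ↔ A = 0 ∧ D = ε * 3 ^ ((m + j) / 2) := by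
  rw [nval, if_neg (by simp [Nat.odd_iff.1 hj]), Nat.cast_ofNat, sqrt_three_pow_odd (hm.add_odd hj),
    ← add_mul_sqrt_three_mul_I_inj]
  push_cast
  simp only [zero_add, mul_right_comm _ Complex.I, mul_assoc]

theorem nval_ne_nval {m j k : ℕ} (hm : Even m) (hj : Odd j) (hk : Odd k) {ε δ : ℤ}
    (h : ε * 3 ^ ((m + j) / 2) ≠ δ * 3 ^ ((m + k) / 2)) : nval 3 m ε j ≠ nval 3 m δ k := by
  rw [← (eq_nval_iff_odd hm hj 0 _ ε).2 ⟨rfl, rfl⟩]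
  exact fun h0 => h ((eq_nval_iff_odd hm hk _ _ _).1 h0).2

theorem zetaPow_eq_stdAddChar (a : ZMod 3) : zetaPow 3 a = ZMod.stdAddChar a := by
  have h := ZMod.stdAddChar_coe (N := 3) (a.val : ℤ)
  rw [Int.cast_natCast, ZMod.natCast_zmod_val] at h
  rw [h, zetaPow, Int.cast_natCast]

theorem expSum_eq {m : ℕ} [Fintype (GaloisField 3 m)] (α β γ : GaloisField 3 m) :
    expSum 3 m α β γ = ∑ x, ZMod.stdAddChar (form α β γ x) := by
  simp only [expSum, zetaPow_eq_stdAddChar, form]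
  norm_num
  congr!

theorem card_filter_range_pow {F : Type*} [Field F] [Fintype F] {π : Fˣ}
    (hπ : ∀ u : Fˣ, u ∈ Subgroup.zpowers π) (P : F → Prop) [DecidablePred P] (h0 : ¬ P 0) :
    ((Finset.range (Fintype.card F - 1)).filter fun i => P ((π : F) ^ i)).card =
      (Finset.univ.filter P).card := by
  classical
  have ho : orderOf π = Fintype.card F - 1 := by
    rw [orderOf_eq_card_of_forall_mem_zpowers hπ, Nat.card_eq_fintype_card, Fintype.card_units]
  refine Finset.card_bij (fun i _ => (π : F) ^ i) ?_ ?_ ?_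
  · intro i hi
    simpa using (Finset.mem_filter.1 hi).2
  · intro i hi j hj hij
    rw [Finset.mem_filter, Finset.mem_range, ← ho] at hi hj
    exact pow_injOn_Iio_orderOf hi.1 hj.1 (Units.ext (by simpa using hij))
  · intro x hx
    have hx0 : x ≠ 0 := by
      rintro rfl
      exact h0 (Finset.mem_filter.1 hx).2
    obtain ⟨i, hi, hix⟩ := Finset.mem_image.1
      (mem_zpowers_iff_mem_range_orderOf.1 (hπ (Units.mk0 x hx0)))
    have hxi : (π : F) ^ i = x := by simpa using congrArg Units.val hix
    refine ⟨i, Finset.mem_filter.2 ⟨ho ▸ hi, ?_⟩, hxi⟩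
    rw [hxi]
    exact (Finset.mem_filter.1 hx).2

theorem exists_expSum_eq {m : ℕ} (hm : m ≠ 0) {π : (GaloisField 3 m)ˣ}
    (hπ : ∀ u : (GaloisField 3 m)ˣ, u ∈ Subgroup.zpowers π) {α β γ : GaloisField 3 m}
    (ht : (α, β, γ) ≠ (0, 0, 0)) :
    ∃ A D : ℤ, expSum 3 m α β γ = (A : ℂ) + D * (√3 : ℝ) * Complex.I ∧
      (3 * ((Finset.range (3 ^ m - 1)).filter fun i =>
        Algebra.trace (ZMod 3) (GaloisField 3 m) (α * (π : GaloisField 3 m) ^ (2 * i) +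
          β * (π : GaloisField 3 m) ^ (4 * i) +
          γ * (π : GaloisField 3 m) ^ (10 * i)) ≠ 0).card : ℤ) = 2 * (3 ^ m - A) ∧
      ∃ j ≤ 4, A ^ 2 + 3 * D ^ 2 = 3 ^ (m + j) := by
  let _ : Fintype (GaloisField 3 m) := Fintype.ofFinite _
  have hq : Fintype.card (GaloisField 3 m) = 3 ^ m := by
    rw [← Nat.card_eq_fintype_card, GaloisField.card 3 m hm]
  obtain ⟨A, D, hS, hw⟩ := exists_sum_eq α β γ
  obtain ⟨j, hj4, hj⟩ := card_ker_polar_eq hq ht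
  refine ⟨A, D, (expSum_eq α β γ).trans hS, ?_, j, hj4, ?_⟩
  · rw [← card_filter_range_pow hπ _ (by simp [form_zero]), hq] at hw
    simpa [form, ← pow_mul, mul_comm] using hw
  · have h := normSq_sum α β γ
    rw [hS, hj, hq, Complex.normSq_apply] at h
    simp at h
    have h3 : √(3 : ℝ) * √3 = 3 := Real.mul_self_sqrt (by norm_num)
    have : (A : ℝ) ^ 2 + 3 * (D : ℝ) ^ 2 = 3 ^ (m + j) := by
      rw [pow_add, ← h]; linear_combination -(D : ℝ) ^ 2 * h3
    exact_mod_cast this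

end TernaryQuadratic

open TernaryQuadratic

theorem weight_counts (m : ℕ) (hme : Even m) (hm6 : 6 ≤ m)
    (π : (GaloisField 3 m)ˣ)
    (hπ : ∀ u : (GaloisField 3 m)ˣ, u ∈ Subgroup.zpowers π) :
    letI : Fact (Nat.Prime 3) := ⟨by norm_num⟩
    let w : GaloisField 3 m × GaloisField 3 m × GaloisField 3 m → ℕ := fun t =>
      ((Finset.range (3 ^ m - 1)).filter (fun i =>
        (Algebra.trace (ZMod 3) (GaloisField 3 m))
          (t.1 * (π : GaloisField 3 m) ^ (2 * i) +
           t.2.1 * (π : GaloisField 3 m) ^ (4 * i) +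
           t.2.2 * (π : GaloisField 3 m) ^ (10 * i)) ≠ 0)).card
    ({t : GaloisField 3 m × GaloisField 3 m × GaloisField 3 m |
        t ≠ (0, 0, 0) ∧ w t = 2 * 3 ^ (m - 1)}.ncard =
      nn 3 m 1 1 + nn 3 m (-1) 1 + nn 3 m 1 3 + nn 3 m (-1) 3) ∧
    ∀ j ∈ ({0, 2, 4} : Set ℕ),
      ({t : GaloisField 3 m × GaloisField 3 m × GaloisField 3 m |
          t ≠ (0, 0, 0) ∧ w t = 2 * 3 ^ (m - 1) - 2 * 3 ^ ((m + j) / 2 - 1)}.ncard =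
        nn 3 m 1 j) ∧
      ({t : GaloisField 3 m × GaloisField 3 m × GaloisField 3 m |
          t ≠ (0, 0, 0) ∧ w t = 2 * 3 ^ (m - 1) + 2 * 3 ^ ((m + j) / 2 - 1)}.ncard =
        nn 3 m (-1) j) := by
  intro w
  have key : ∀ t : GaloisField 3 m × GaloisField 3 m × GaloisField 3 m, t ≠ (0, 0, 0) →
      ∃ A D : ℤ, expSum 3 m t.1 t.2.1 t.2.2 = (A : ℂ) + D * (√3 : ℝ) * Complex.I ∧
        (3 * w t : ℤ) = 2 * (3 ^ m - A) ∧ ∃ j ≤ 4, A ^ 2 + 3 * D ^ 2 = 3 ^ (m + j) :=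
    fun t ht => exists_expSum_eq (by omega) hπ ht
  have hX : (3 : ℤ) ^ m = 3 * ((3 ^ (m - 1) : ℕ) : ℤ) := by
    rw [Nat.cast_pow, Nat.cast_ofNat, ← pow_succ', Nat.sub_add_cancel (by omega)]
  have hzero : ∀ t, t ≠ (0, 0, 0) → (w t = 2 * 3 ^ (m - 1) ↔
      ((expSum 3 m t.1 t.2.1 t.2.2 = nval 3 m 1 1 ∨ expSum 3 m t.1 t.2.1 t.2.2 = nval 3 m (-1) 1) ∨
        expSum 3 m t.1 t.2.1 t.2.2 = nval 3 m 1 3) ∨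
        expSum 3 m t.1 t.2.1 t.2.2 = nval 3 m (-1) 3) := by
    intro t ht
    obtain ⟨A, D, hS, hw, j, hj, hAD⟩ := key t ht
    rw [hS, eq_nval_iff_odd hme (by decide), eq_nval_iff_odd hme (by decide),
      eq_nval_iff_odd hme (by decide), eq_nval_iff_odd hme (by decide)]
    have hA : w t = 2 * 3 ^ (m - 1) ↔ A = 0 := by omega
    rw [hA]
    refine ⟨fun h0 => ?_, by tauto⟩
    obtain ⟨he, ho⟩ := sq_add_three_mul_sq_eq_pow _ _ _ hAD
    rcases Nat.even_or_odd (m + j) with hp | hp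
    · rcases (he hp).2 with h | h <;> simp [h] at h0
    · have hj' : j = 1 ∨ j = 3 := by
        rw [Nat.odd_iff] at hp; rw [Nat.even_iff] at hme; omega
      have hD := (ho hp).2
      rcases hj' with rfl | rfl <;> rcases hD with h | h <;> simp [h0, h]
  have hne : ∀ j ∈ ({0, 2, 4} : Set ℕ), ∀ ε : ℤ, ε ≠ 0 → ∀ t, t ≠ (0, 0, 0) →
      ((w t : ℤ) = 2 * (3 ^ (m - 1) : ℕ) - 2 * (ε * (3 ^ ((m + j) / 2 - 1) : ℕ)) ↔
        expSum 3 m t.1 t.2.1 t.2.2 = nval 3 m ε j) := by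
    intro j hj ε hε t ht
    obtain ⟨A, D, hS, hw, k, -, hAD⟩ := key t ht
    have hje : Even j := by rcases hj with rfl | rfl | rfl <;> decide
    have hY : (3 : ℤ) ^ ((m + j) / 2) = 3 * ((3 ^ ((m + j) / 2 - 1) : ℕ) : ℤ) := by
      rw [Nat.cast_pow, Nat.cast_ofNat, ← pow_succ', Nat.sub_add_cancel (by omega)]
    have hA : (w t : ℤ) = 2 * (3 ^ (m - 1) : ℕ) - 2 * (ε * (3 ^ ((m + j) / 2 - 1) : ℕ)) ↔
        A = ε * 3 ^ ((m + j) / 2) := by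
      rw [hY]
      constructor <;> intro h <;> linarith
    rw [hS, eq_nval_iff_even hme hje, hA]
    refine ⟨fun h => ⟨h, ?_⟩, And.left⟩
    obtain ⟨he, ho⟩ := sq_add_three_mul_sq_eq_pow _ _ _ hAD
    rcases Nat.even_or_odd (m + k) with hp | hp
    · exact (he hp).1
    · have h0 := (ho hp).1
      rw [h] at h0
      simp [hε] at h0
  refine ⟨?_, fun j hj => ⟨?_, ?_⟩⟩
  · simp only [nn]
    have e1 : (m + 1) / 2 = m / 2 := by rw [Nat.even_iff] at hme; omega
    have e3 : (m + 3) / 2 = m / 2 + 1 := by rw [Nat.even_iff] at hme; omega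
    have hpos : (0 : ℤ) < 3 ^ (m / 2) := by positivity
    have hdisj : ∀ {ε δ : ℤ} {j k : ℕ}, nval 3 m ε j ≠ nval 3 m δ k →
        Disjoint {t : GaloisField 3 m × GaloisField 3 m × GaloisField 3 m |
            t ≠ (0, 0, 0) ∧ expSum 3 m t.1 t.2.1 t.2.2 = nval 3 m ε j}
          {t | t ≠ (0, 0, 0) ∧ expSum 3 m t.1 t.2.1 t.2.2 = nval 3 m δ k} :=
      fun h => Set.disjoint_left.2 fun t h1 h2 => h (h1.2.symm.trans h2.2)
    have n11 : nval 3 m 1 1 ≠ nval 3 m (-1) 1 :=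
      nval_ne_nval hme (by decide) (by decide) (by rw [e1]; omega)
    have n13 : nval 3 m 1 1 ≠ nval 3 m 1 3 :=
      nval_ne_nval hme (by decide) (by decide) (by rw [e1, e3, pow_succ]; omega)
    have n13' : nval 3 m (-1) 1 ≠ nval 3 m 1 3 :=
      nval_ne_nval hme (by decide) (by decide) (by rw [e1, e3, pow_succ]; omega)
    have n31 : nval 3 m 1 1 ≠ nval 3 m (-1) 3 :=
      nval_ne_nval hme (by decide) (by decide) (by rw [e1, e3, pow_succ]; omega)
    have n31' : nval 3 m (-1) 1 ≠ nval 3 m (-1) 3 :=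
      nval_ne_nval hme (by decide) (by decide) (by rw [e1, e3, pow_succ]; omega)
    have n33 : nval 3 m 1 3 ≠ nval 3 m (-1) 3 :=
      nval_ne_nval hme (by decide) (by decide) (by rw [e3, pow_succ]; omega)
    rw [← Set.ncard_union_eq (hdisj n11) (Set.toFinite _) (Set.toFinite _),
      ← Set.ncard_union_eq (Set.disjoint_union_left.2 ⟨hdisj n13, hdisj n13'⟩)
        (Set.toFinite _) (Set.toFinite _),
      ← Set.ncard_union_eq (Set.disjoint_union_left.2
        ⟨Set.disjoint_union_left.2 ⟨hdisj n31, hdisj n31'⟩, hdisj n33⟩)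
        (Set.toFinite _) (Set.toFinite _)]
    congr 1
    ext t
    simp only [Set.mem_union, Set.mem_ofPred_eq, ← and_or_left]
    exact and_congr_right (hzero t)
  · rw [nn]
    congr 1
    ext t
    refine and_congr_right fun ht => ?_
    rw [← hne j hj 1 one_ne_zero t ht]
    have : 3 ^ ((m + j) / 2 - 1) ≤ 3 ^ (m - 1) :=
      Nat.pow_le_pow_right (by norm_num) (by rcases hj with rfl | rfl | rfl <;> omega)
    omega
  · rw [nn]
    congr 1
    ext t
    refine and_congr_right fun ht => ?_
    rw [← hne j hj (-1) (by norm_num) t ht]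
    omega
end

section
/- Let p = 3 and q = 3^m with m an even positive integer, and let A_j' denote the number of codewords of Hamming weight j in the dual code C^⊥. Then A_0' = 1, A_1' = 0, A_2' = 3^m − 1, A_3' = 0, and A_4' = (3^m − 1)(2·3^m − 6)/3 + (3^m − 1)(3^m − 3)/2. -/
open Finset

section PowerSums

variable {K : Type*} [Field K] [CharP K 3]

theorem three_eq_zero_of_charP (K : Type*) [Field K] [CharP K 3] : (3 : K) = 0 := by
  exact_mod_cast CharP.cast_eq_zero K 3

theorem ne_neg_self_of_charP_three {x : K} (hx : x ≠ 0) : x ≠ -x := by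
  intro h
  apply hx
  linear_combination x * three_eq_zero_of_charP K - h

theorem eq_of_power_sums_three_eq_zero {a b c : K} (h1 : a + b + c = 0)
    (h2 : a ^ 2 + b ^ 2 + c ^ 2 = 0) : a = b := by
  have : (a - b) ^ 2 = 0 := by
    linear_combination (c - a - b) * h1 - h2 +
      ((a - b) ^ 2 + 2 * a * b) * three_eq_zero_of_charP K
  exact sub_eq_zero.mp (by simpa using this)

theorem mul_eq_zero_of_power_sums_two_one {a b c : K} (h1 : a + b = c)
    (h2 : a ^ 2 + b ^ 2 = c ^ 2) : a * b = 0 := by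
  subst h1
  linear_combination h2 + a * b * three_eq_zero_of_charP K

theorem mul_eq_zero_of_power_sums_three_one {a b c d : K} (h1 : a + b + c = d)
    (h2 : a ^ 2 + b ^ 2 + c ^ 2 = d ^ 2) (h5 : a ^ 5 + b ^ 5 + c ^ 5 = d ^ 5) :
    d ^ 2 * (a * b * c) = 0 := by
  have he : a * b + b * c + c * a = 0 := by
    subst h1
    linear_combination h2 + (a * b + b * c + c * a) * three_eq_zero_of_charP K
  subst h1
  linear_combination (-5 * (a + b + c) ^ 3 + 5 * (a + b + c) * (a * b + b * c + c * a)
      - 5 * (a * b * c)) * he - h5 +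
    2 * (a + b + c) ^ 2 * (a * b * c) * three_eq_zero_of_charP K

theorem eq_or_eq_of_power_sums_two_two {a b c d : K} (h1 : a + b = c + d)
    (h2 : a ^ 2 + b ^ 2 = c ^ 2 + d ^ 2) : (a = c ∧ b = d) ∨ (a = d ∧ b = c) := by
  have : (a - c) * (a - d) = 0 := by
    linear_combination (c * d - a * b) * three_eq_zero_of_charP K - h2 + (2 * a + b + c + d) * h1
  rcases mul_eq_zero.mp this with h | h
  · exact Or.inl ⟨sub_eq_zero.mp h, by linear_combination h1 - h⟩
  · exact Or.inr ⟨sub_eq_zero.mp h, by linear_combination h1 - h⟩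

theorem sq_eq_sq_add_and_sq_sub {x y c d : K} (h1 : x ^ 2 + y ^ 2 + c + d = 0)
    (h2 : x ^ 4 + y ^ 4 + c ^ 2 + d ^ 2 = 0) :
    (c = (x + y) ^ 2 ∧ d = (x - y) ^ 2) ∨ (c = (x - y) ^ 2 ∧ d = (x + y) ^ 2) := by
  have h3 := three_eq_zero_of_charP K
  apply eq_or_eq_of_power_sums_two_two
  · linear_combination h1 - (x ^ 2 + y ^ 2) * h3
  · linear_combination h2 - (x ^ 4 + 4 * x ^ 2 * y ^ 2 + y ^ 4) * h3

end PowerSums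

section Counting

variable {K : Type*} [Field K] [Fintype K] [DecidableEq K]

/-- Pairs of disjoint sets of nonzero elements with equal second, fourth and tenth power sums,
and with prescribed cardinalities. -/
def balancedPairs (K : Type*) [Field K] [Fintype K] [DecidableEq K] (a b : ℕ) :
    Finset (Finset K × Finset K) :=
  {p | (0 ∉ p.1 ∧ 0 ∉ p.2 ∧ Disjoint p.1 p.2 ∧ ∑ x ∈ p.1, x ^ 2 = ∑ x ∈ p.2, x ^ 2 ∧
    ∑ x ∈ p.1, x ^ 4 = ∑ x ∈ p.2, x ^ 4 ∧ ∑ x ∈ p.1, x ^ 10 = ∑ x ∈ p.2, x ^ 10) ∧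
    p.1.card = a ∧ p.2.card = b}

theorem mem_balancedPairs {a b : ℕ} {p : Finset K × Finset K} :
    p ∈ balancedPairs K a b ↔
      (0 ∉ p.1 ∧ 0 ∉ p.2 ∧ Disjoint p.1 p.2 ∧ ∑ x ∈ p.1, x ^ 2 = ∑ x ∈ p.2, x ^ 2 ∧
        ∑ x ∈ p.1, x ^ 4 = ∑ x ∈ p.2, x ^ 4 ∧ ∑ x ∈ p.1, x ^ 10 = ∑ x ∈ p.2, x ^ 10) ∧
        p.1.card = a ∧ p.2.card = b := by
  simp [balancedPairs]

theorem card_balancedPairs_comm (a b : ℕ) :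
    (balancedPairs K a b).card = (balancedPairs K b a).card := by
  apply card_nbij' Prod.swap Prod.swap
  · intro p
    simp only [mem_coe, mem_balancedPairs, Prod.fst_swap, Prod.snd_swap]
    rintro ⟨⟨h1, h2, h3, h4, h5, h6⟩, h7, h8⟩
    exact ⟨⟨h2, h1, h3.symm, h4.symm, h5.symm, h6.symm⟩, h8, h7⟩
  · intro p
    simp only [mem_coe, mem_balancedPairs, Prod.fst_swap, Prod.snd_swap]
    rintro ⟨⟨h1, h2, h3, h4, h5, h6⟩, h7, h8⟩
    exact ⟨⟨h2, h1, h3.symm, h4.symm, h5.symm, h6.symm⟩, h8, h7⟩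
  · intro p _; simp
  · intro p _; simp

theorem disjoint_balancedPairs {a b a' b' : ℕ} (h : (a, b) ≠ (a', b')) :
    Disjoint (balancedPairs K a b) (balancedPairs K a' b') := by
  rw [Finset.disjoint_left]
  intro p hp hp'
  rw [mem_balancedPairs] at hp hp'
  exact h (by rw [← hp.2.1, ← hp.2.2, ← hp'.2.1, ← hp'.2.2])

theorem card_balancedPairs_zero_zero : (balancedPairs K 0 0).card = 1 := by
  rw [card_eq_one]
  refine ⟨(∅, ∅), ?_⟩
  ext ⟨P, N⟩
  simp only [mem_balancedPairs, card_eq_zero, mem_singleton, Prod.mk.injEq]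
  constructor
  · exact fun h => h.2
  · rintro ⟨rfl, rfl⟩
    simp

theorem card_balancedPairs_one_zero : (balancedPairs K 1 0).card = 0 := by
  rw [card_eq_zero, eq_empty_iff_forall_notMem]
  rintro ⟨P, N⟩ h
  rw [mem_balancedPairs] at h
  obtain ⟨⟨h1, h2, h3, h4, h5, h6⟩, h7, h8⟩ := h
  dsimp only at *
  obtain ⟨x, rfl⟩ := card_eq_one.mp h7
  obtain rfl := card_eq_zero.mp h8
  simp at h1 h4
  exact h1 h4.symm

variable [CharP K 3]

theorem card_balancedPairs_two_zero : (balancedPairs K 2 0).card = 0 := by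
  rw [card_eq_zero, eq_empty_iff_forall_notMem]
  rintro ⟨P, N⟩ h
  rw [mem_balancedPairs] at h
  obtain ⟨⟨h1, h2, h3, h4, h5, h6⟩, h7, h8⟩ := h
  dsimp only at *
  obtain ⟨x, y, hxy, rfl⟩ := card_eq_two.mp h7
  obtain rfl := card_eq_zero.mp h8
  simp [hxy] at h1 h4 h5
  have : x ^ 4 = 0 := by
    linear_combination x ^ 4 * three_eq_zero_of_charP K - h5 + (y ^ 2 - x ^ 2) * h4
  exact h1.1 (pow_eq_zero_iff (by decide) |>.mp this).symm

theorem card_balancedPairs_one_one :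
    (balancedPairs K 1 1).card = Fintype.card K - 1 := by
  rw [← card_univ, ← card_erase_of_mem (mem_univ (0 : K))]
  symm
  apply card_nbij (fun x => ({x}, {-x}))
  · intro x hx
    have hx0 : x ≠ 0 := by simpa using hx
    have h := ne_neg_self_of_charP_three hx0
    simp [mem_balancedPairs, h, hx0, Ne.symm hx0, Even.neg_pow (by decide : Even 4),
      Even.neg_pow (by decide : Even 10)]
  · intro x _ y _ h
    simpa using h
  · rintro ⟨P, N⟩ h
    rw [mem_coe, mem_balancedPairs] at h
    obtain ⟨⟨h1, h2, h3, h4, h5, h6⟩, h7, h8⟩ := h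
    dsimp only at *
    obtain ⟨x, rfl⟩ := card_eq_one.mp h7
    obtain ⟨y, rfl⟩ := card_eq_one.mp h8
    simp at h1 h2 h3 h4
    rcases sq_eq_sq_iff_eq_or_eq_neg.mp h4 with h | h
    · exact absurd h h3
    · exact ⟨x, by simpa using Ne.symm h1, by simp [h]⟩

theorem card_balancedPairs_three_zero : (balancedPairs K 3 0).card = 0 := by
  rw [card_eq_zero, eq_empty_iff_forall_notMem]
  rintro ⟨P, N⟩ h
  rw [mem_balancedPairs] at h
  obtain ⟨⟨h1, h2, h3, h4, h5, h6⟩, h7, h8⟩ := h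
  dsimp only at *
  obtain ⟨x, y, z, hxy, hxz, hyz, rfl⟩ := card_eq_three.mp h7
  obtain rfl := card_eq_zero.mp h8
  simp [hxy, hxz, hyz] at h4 h5
  have hab : x ^ 2 = y ^ 2 := eq_of_power_sums_three_eq_zero (c := z ^ 2)
    (by linear_combination h4) (by linear_combination h5)
  have hac : x ^ 2 = z ^ 2 := eq_of_power_sums_three_eq_zero (c := y ^ 2)
    (by linear_combination h4) (by linear_combination h5)
  rcases sq_eq_sq_iff_eq_or_eq_neg.mp hab with h | h
  · exact hxy h
  rcases sq_eq_sq_iff_eq_or_eq_neg.mp hac with h' | h'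
  · exact hxz h'
  · exact hyz (neg_injective (h.symm.trans h'))

theorem card_balancedPairs_two_one : (balancedPairs K 2 1).card = 0 := by
  rw [card_eq_zero, eq_empty_iff_forall_notMem]
  rintro ⟨P, N⟩ h
  rw [mem_balancedPairs] at h
  obtain ⟨⟨h1, h2, h3, h4, h5, h6⟩, h7, h8⟩ := h
  dsimp only at *
  obtain ⟨x, y, hxy, rfl⟩ := card_eq_two.mp h7
  obtain ⟨z, rfl⟩ := card_eq_one.mp h8
  simp [hxy] at h1 h4 h5
  have := mul_eq_zero_of_power_sums_two_one h4 (by linear_combination h5)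
  simp [Ne.symm h1.1, Ne.symm h1.2] at this

theorem card_balancedPairs_three_one : (balancedPairs K 3 1).card = 0 := by
  rw [card_eq_zero, eq_empty_iff_forall_notMem]
  rintro ⟨P, N⟩ h
  rw [mem_balancedPairs] at h
  obtain ⟨⟨h1, h2, h3, h4, h5, h6⟩, h7, h8⟩ := h
  dsimp only at *
  obtain ⟨x, y, z, hxy, hxz, hyz, rfl⟩ := card_eq_three.mp h7
  obtain ⟨w, rfl⟩ := card_eq_one.mp h8
  simp [hxy, hxz, hyz] at h1 h2 h4 h5 h6
  have := mul_eq_zero_of_power_sums_three_one (a := x ^ 2) (b := y ^ 2) (c := z ^ 2) (d := w ^ 2)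
    (by linear_combination h4) (by linear_combination h5) (by linear_combination h6)
  simp [Ne.symm h1.1, Ne.symm h1.2.1, Ne.symm h1.2.2, Ne.symm h2] at this

/-- Ordered pairs of nonzero elements that are distinct up to sign. -/
def signIndependentPairs (K : Type*) [Field K] [Fintype K] [DecidableEq K] : Finset (K × K) :=
  {p | p.1 ≠ 0 ∧ p.2 ≠ 0 ∧ p.1 ≠ p.2 ∧ p.1 ≠ -p.2}

theorem card_signIndependentPairs :
    (signIndependentPairs K).card = (Fintype.card K - 1) * (Fintype.card K - 3) := by
  rw [card_eq_sum_card_fiberwise (f := Prod.fst) (t := univ.erase (0 : K))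
    (by intro p hp; simp [signIndependentPairs] at hp ⊢; exact hp.1)]
  rw [sum_const_nat (m := Fintype.card K - 3)]
  · rw [card_erase_of_mem (mem_univ _), card_univ]
  · intro x hx
    have hx0 : x ≠ 0 := by simpa using hx
    have hne := ne_neg_self_of_charP_three hx0
    have : {p ∈ signIndependentPairs K | p.1 = x} =
        ({x} : Finset K) ×ˢ (univ \ ({0, x, -x} : Finset K)) := by
      ext ⟨a, b⟩
      simp [signIndependentPairs]
      grind
    rw [this, card_product, card_singleton, one_mul, card_sdiff_of_subset (subset_univ _),
      card_univ, card_eq_three.mpr ⟨0, x, -x, hx0.symm, by simpa using hx0, hne, rfl⟩]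

theorem two_mul_card_balancedPairs_two_two :
    2 * (balancedPairs K 2 2).card = (Fintype.card K - 1) * (Fintype.card K - 3) := by
  have hs : ((balancedPairs K 2 2).sigma fun p => p.1.offDiag).card =
      2 * (balancedPairs K 2 2).card := by
    rw [card_sigma, sum_const_nat (m := 2), mul_comm]
    intro p hp
    rw [offDiag_card, (mem_balancedPairs.mp hp).2.1]
  rw [← hs, ← card_signIndependentPairs]
  symm
  apply card_nbij (fun t => ⟨({t.1, t.2}, {-t.1, -t.2}), t⟩)
  · rintro ⟨x, y⟩ h
    simp only [signIndependentPairs, mem_coe, mem_filter, mem_univ, true_and] at h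
    obtain ⟨hx, hy, hxy, hxy'⟩ := h
    have hx' := ne_neg_self_of_charP_three hx
    have hy' := ne_neg_self_of_charP_three hy
    have hyx' : y ≠ -x := fun h => hxy' (by simp [h])
    simp [mem_balancedPairs, hx, hy, hxy, Ne.symm hxy', Ne.symm hx', Ne.symm hy',
      Ne.symm hyx', Ne.symm hx, Ne.symm hy,
      Even.neg_pow (by decide : Even 4), Even.neg_pow (by decide : Even 10)]
  · intro s _ t _ h
    exact eq_of_heq (Sigma.mk.inj h).2
  · rintro ⟨⟨P, N⟩, ⟨x, y⟩⟩ h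
    simp only [coe_sigma, Set.mem_sigma_iff, mem_coe, mem_balancedPairs, mem_offDiag] at h
    obtain ⟨⟨⟨h1, h2, h3, h4, h5, h6⟩, h7, h8⟩, hxP, hyP, hxy⟩ := h
    have hP : P = {x, y} := (eq_of_subset_of_card_le (by simp [insert_subset_iff, hxP, hyP])
      (by rw [h7, card_pair hxy])).symm
    obtain ⟨z, w, hzw, rfl⟩ := card_eq_two.mp h8
    subst hP
    simp [hxy, hzw] at h1 h2 h3 h4 h5
    obtain ⟨⟨hxz, hxw⟩, hyz, hyw⟩ := h3
    have hN : ({-x, -y} : Finset K) = {z, w} ∧ x ≠ -y := by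
      rcases eq_or_eq_of_power_sums_two_two h4 (by linear_combination h5) with ⟨h, h'⟩ | ⟨h, h'⟩
      all_goals
        rcases sq_eq_sq_iff_eq_or_eq_neg.mp h with h | h
        · simp_all
        rcases sq_eq_sq_iff_eq_or_eq_neg.mp h' with h' | h'
        · simp_all
        subst h h'
        refine ⟨by simp [pair_comm], fun h => ?_⟩
        simp_all
    refine ⟨(x, y), ?_, ?_⟩
    · simp [signIndependentPairs, hxy, hN.2, Ne.symm h1.1, Ne.symm h1.2]
    · simp [hN.1]

theorem three_mul_card_balancedPairs_four_zero :
    3 * (balancedPairs K 4 0).card = (Fintype.card K - 1) * (Fintype.card K - 3) := by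
  have hs : ((balancedPairs K 4 0).sigma fun p => p.1.offDiag).card =
      12 * (balancedPairs K 4 0).card := by
    rw [card_sigma, sum_const_nat (m := 12), mul_comm]
    intro p hp
    rw [offDiag_card, (mem_balancedPairs.mp hp).2.1]
  have hsigns : ({1, -1} : Finset K).card = 2 :=
    card_pair (ne_neg_self_of_charP_three one_ne_zero)
  have h3 := three_eq_zero_of_charP K
  suffices h : (signIndependentPairs K ×ˢ (({1, -1} : Finset K) ×ˢ ({1, -1} : Finset K))).card =
      ((balancedPairs K 4 0).sigma fun p => p.1.offDiag).card by
    rw [hs, card_product, card_product, hsigns, card_signIndependentPairs] at h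
    omega
  have key : ∀ x y e f : K, (x, y) ∈ signIndependentPairs K → (e = 1 ∨ e = -1) →
      (f = 1 ∨ f = -1) → e * (x + y) ≠ 0 ∧ f * (x - y) ≠ 0 ∧ x ≠ e * (x + y) ∧
        x ≠ f * (x - y) ∧ y ≠ e * (x + y) ∧ y ≠ f * (x - y) ∧ e * (x + y) ≠ f * (x - y) := by
    intro x y e f h he hf
    simp only [signIndependentPairs, mem_filter, mem_univ, true_and] at h
    obtain ⟨hx, hy, hxy, hxy'⟩ := h
    rcases he with rfl | rfl <;> rcases hf with rfl | rfl <;> grind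
  apply card_nbij (fun t => ⟨({t.1.1, t.1.2, t.2.1 * (t.1.1 + t.1.2),
    t.2.2 * (t.1.1 - t.1.2)}, ∅), t.1⟩)
  · rintro ⟨⟨x, y⟩, e, f⟩ h
    simp only [coe_product, Set.mem_prod, mem_coe, mem_insert, mem_singleton] at h
    obtain ⟨hxy, he, hf⟩ := h
    obtain ⟨k1, k2, k3, k4, k5, k6, k7⟩ := key x y e f hxy he hf
    simp only [signIndependentPairs, mem_filter, mem_univ, true_and] at hxy
    obtain ⟨hx, hy, hxy, hxy'⟩ := hxy
    have he2 : e ^ 2 = 1 := by rcases he with rfl | rfl <;> ring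
    have hf2 : f ^ 2 = 1 := by rcases hf with rfl | rfl <;> ring
    have he4 : e ^ 4 = 1 := by rcases he with rfl | rfl <;> ring
    have hf4 : f ^ 4 = 1 := by rcases hf with rfl | rfl <;> ring
    have he10 : e ^ 10 = 1 := by rcases he with rfl | rfl <;> ring
    have hf10 : f ^ 10 = 1 := by rcases hf with rfl | rfl <;> ring
    have hsum (g : K → K) : ∑ t ∈ {x, y, e * (x + y), f * (x - y)}, g t =
        g x + (g y + (g (e * (x + y)) + g (f * (x - y)))) := by
      rw [sum_insert (by simp only [mem_insert, mem_singleton]; tauto),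
        sum_insert (by simp only [mem_insert, mem_singleton]; tauto), sum_pair k7]
    simp only [coe_sigma, Set.mem_sigma_iff, mem_coe, mem_balancedPairs, mem_offDiag, hsum,
      mul_pow, he2, hf2, he4, hf4, he10, hf10, sum_empty, card_empty]
    refine ⟨⟨⟨?_, by simp, by simp, ?_, ?_, ?_⟩, ?_, trivial⟩, by simp, by simp, hxy⟩
    · simp only [mem_insert, mem_singleton, not_or]
      exact ⟨hx.symm, hy.symm, k1.symm, k2.symm⟩
    · linear_combination (x ^ 2 + y ^ 2) * h3
    · linear_combination (x ^ 4 + y ^ 4 + 4 * x ^ 2 * y ^ 2) * h3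
    · linear_combination (x ^ 10 + y ^ 10 + 30 * x ^ 8 * y ^ 2 + 140 * x ^ 6 * y ^ 4 +
        140 * x ^ 4 * y ^ 6 + 30 * x ^ 2 * y ^ 8) * h3
    · exact card_eq_four.mpr ⟨_, _, _, _, hxy, k3, k4, k5, k6, k7, rfl⟩
  · rintro ⟨⟨x, y⟩, e, f⟩ h ⟨⟨x', y'⟩, e', f'⟩ h' heq
    obtain ⟨hP, ht⟩ := Sigma.mk.inj heq
    obtain ⟨rfl, rfl⟩ := Prod.mk.inj (eq_of_heq ht)
    have hP := (Prod.mk.inj hP).1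
    simp only [coe_product, Set.mem_prod, mem_coe, mem_insert, mem_singleton] at h h' hP
    obtain ⟨hxy, he, hf⟩ := h
    obtain ⟨-, he', hf'⟩ := h'
    obtain ⟨k1, k2, k3, k4, k5, k6, k7⟩ := key x y e f hxy he hf
    obtain ⟨-, -, -, -, -, -, l7⟩ := key x y e f' hxy he hf'
    obtain ⟨-, -, -, -, -, -, l8⟩ := key x y e' f hxy he' hf
    have m1 : e * (x + y) ∈ ({x, y, e' * (x + y), f' * (x - y)} : Finset K) := by
      rw [← hP]; simp
    have m2 : f * (x - y) ∈ ({x, y, e' * (x + y), f' * (x - y)} : Finset K) := by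
      rw [← hP]; simp
    simp only [mem_insert, mem_singleton, k3.symm, k5.symm, l7, false_or, or_false] at m1
    simp only [mem_insert, mem_singleton, k4.symm, k6.symm, l8.symm, false_or] at m2
    rw [mul_right_cancel₀ (right_ne_zero_of_mul k1) m1,
      mul_right_cancel₀ (right_ne_zero_of_mul k2) m2]
  · rintro ⟨⟨P, N⟩, ⟨x, y⟩⟩ h
    simp only [coe_sigma, Set.mem_sigma_iff, mem_coe, mem_balancedPairs, mem_offDiag] at h
    obtain ⟨⟨⟨h1, h2, -, h4, h5, -⟩, h7, h8⟩, hxP, hyP, hxy⟩ := h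
    obtain rfl := card_eq_zero.mp h8
    have hyP' : y ∈ P.erase x := mem_erase.mpr ⟨hxy.symm, hyP⟩
    obtain ⟨z, w, hzw, hQ⟩ := (card_eq_two (s := (P.erase x).erase y)).mp (by
      rw [card_erase_of_mem hyP', card_erase_of_mem hxP, h7])
    have hP : P = {x, y, z, w} := by
      rw [← hQ, insert_erase hyP', insert_erase hxP]
    have hz : z ∈ (P.erase x).erase y := by simp [hQ]
    have hw : w ∈ (P.erase x).erase y := by simp [hQ]
    simp only [mem_erase] at hz hw
    obtain ⟨hzy, hzx, hzP⟩ := hz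
    obtain ⟨hwy, hwx, hwP⟩ := hw
    have hne : ∀ {t : K}, t ∈ P → t ≠ 0 := fun ht h => h1 (h ▸ ht)
    have hsum (g : K → K) : ∑ t ∈ P, g t = g x + (g y + (g z + g w)) := by
      rw [hP, sum_insert (by simp [hxy, hzx.symm, hwx.symm]),
        sum_insert (by simp [hzy.symm, hwy.symm]), sum_pair hzw]
    simp only [hsum, sum_empty] at h4 h5
    have main : ∀ z w : K, P = {x, y, z, w} → z ≠ 0 → w ≠ 0 → z ^ 2 = (x + y) ^ 2 →
        w ^ 2 = (x - y) ^ 2 → ∃ t : (K × K) × K × K,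
          t ∈ (↑(signIndependentPairs K ×ˢ (({1, -1} : Finset K) ×ˢ ({1, -1} : Finset K))) :
            Set ((K × K) × K × K)) ∧
          (⟨({t.1.1, t.1.2, t.2.1 * (t.1.1 + t.1.2), t.2.2 * (t.1.1 - t.1.2)}, ∅), t.1⟩ :
            (_ : Finset K × Finset K) × K × K) = ⟨(P, ∅), (x, y)⟩ := by
      intro z w hP hz hw hz2 hw2
      have hT : (x, y) ∈ signIndependentPairs K := by
        simp only [signIndependentPairs, mem_filter, mem_univ, true_and]
        refine ⟨hne hxP, hne hyP, hxy, fun h => hz ?_⟩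
        simpa [h] using hz2
      obtain ⟨e, he, hze⟩ : ∃ e : K, (e = 1 ∨ e = -1) ∧ z = e * (x + y) := by
        rcases sq_eq_sq_iff_eq_or_eq_neg.mp hz2 with h | h
        · exact ⟨1, Or.inl rfl, by simp [h]⟩
        · exact ⟨-1, Or.inr rfl, by rw [h]; ring⟩
      obtain ⟨f, hf, hwf⟩ : ∃ f : K, (f = 1 ∨ f = -1) ∧ w = f * (x - y) := by
        rcases sq_eq_sq_iff_eq_or_eq_neg.mp hw2 with h | h
        · exact ⟨1, Or.inl rfl, by simp [h]⟩
        · exact ⟨-1, Or.inr rfl, by rw [h]; ring⟩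
      refine ⟨((x, y), e, f), ?_, ?_⟩
      · simp only [coe_product, Set.mem_prod, mem_coe, mem_insert, mem_singleton]
        exact ⟨hT, he, hf⟩
      · simp only [hP, hze, hwf]
    rcases sq_eq_sq_add_and_sq_sub (x := x) (y := y) (c := z ^ 2) (d := w ^ 2)
      (by linear_combination h4) (by linear_combination h5) with ⟨hz, hw⟩ | ⟨hz, hw⟩
    · exact main z w hP (hne hzP) (hne hwP) hz hw
    · exact main w z (by rw [hP, pair_comm z w]) (hne hwP) (hne hzP) hw hz

end Counting

section Transfer

theorem sum_zmod_three_smul {ι K : Type*} [Fintype ι] [Field K]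
    [Algebra (ZMod 3) K] (v : ι → ZMod 3) (y : ι → K) :
    ∑ i, v i • y i = ∑ i with v i = 1, y i - ∑ i with v i = -1, y i := by
  rw [sum_filter, sum_filter, ← sum_sub_distrib]
  refine sum_congr rfl fun i _ => ?_
  have : ∀ a : ZMod 3, a = 0 ∨ a = 1 ∨ a = -1 := by decide
  rcases this (v i) with h | h | h
  · rw [h]; simp
  · rw [h]; simp [show (1 : ZMod 3) ≠ -1 by decide]
  · rw [h]; simp [show (-1 : ZMod 3) ≠ 1 by decide]

theorem forall_sum_mul_trace_eq_zero_iff {ι L : Type*} [Fintype ι] [Field L] [Finite L]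
    [Algebra (ZMod 3) L] (v : ι → ZMod 3) (a b c : ι → L) :
    (∀ t : L × L × L, ∑ i, v i * Algebra.trace (ZMod 3) L
        (t.1 * a i + t.2.1 * b i + t.2.2 * c i) = 0) ↔
      ∑ i, v i • a i = 0 ∧ ∑ i, v i • b i = 0 ∧ ∑ i, v i • c i = 0 := by
  have key (t : L × L × L) : ∑ i, v i * Algebra.trace (ZMod 3) L
      (t.1 * a i + t.2.1 * b i + t.2.2 * c i) = Algebra.trace (ZMod 3) L
        (t.1 * ∑ i, v i • a i + t.2.1 * ∑ i, v i • b i + t.2.2 * ∑ i, v i • c i) := by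
    simp only [mul_sum, ← sum_add_distrib, map_sum]
    refine sum_congr rfl fun i _ => ?_
    rw [← smul_eq_mul, ← map_smul]
    simp only [smul_add, mul_smul_comm]
  simp only [key]
  have : Module.Finite (ZMod 3) L := Module.Finite.of_finite
  have nd {s : L} (h : ∀ t, Algebra.trace (ZMod 3) L (t * s) = 0) : s = 0 :=
    (traceForm_nondegenerate (ZMod 3) L).2 s h
  constructor
  · intro h
    refine ⟨nd fun t => ?_, nd fun t => ?_, nd fun t => ?_⟩
    · simpa using h (t, 0, 0)
    · simpa using h (0, t, 0)
    · simpa using h (0, 0, t)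
  · rintro ⟨h1, h2, h3⟩ t
    simp [h1, h2, h3]

theorem hammingNorm_zmod_three {ι : Type*} [Fintype ι] (v : ι → ZMod 3) :
    hammingNorm v = #{i | v i = 1} + #{i | v i = -1} := by
  classical
  rw [hammingNorm, ← card_union_of_disjoint, ← filter_or]
  · congr 1
    ext i
    have : ∀ a : ZMod 3, a ≠ 0 ↔ a = 1 ∨ a = -1 := by decide
    simp [this (v i)]
  · rw [disjoint_filter]
    intro i _ h
    rw [h]
    decide

theorem ncard_power_sums_eq_zero {ι K : Type*} [Fintype ι] [Field K] [Fintype K]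
    [DecidableEq K] [Algebra (ZMod 3) K] (e : ι → K) (he : Function.Injective e)
    (he0 : ∀ x, x ≠ 0 ↔ ∃ i, e i = x) (j : ℕ) :
    {v : ι → ZMod 3 | (∑ i, v i • e i ^ 2 = 0 ∧ ∑ i, v i • e i ^ 4 = 0 ∧
      ∑ i, v i • e i ^ 10 = 0) ∧ hammingNorm v = j}.ncard =
      ∑ ab ∈ antidiagonal j, #(balancedPairs K ab.1 ab.2) := by
  classical
  rw [← card_biUnion fun x _ y _ h => disjoint_balancedPairs (by simpa using h),
    ← Set.ncard_coe_finset]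
  have hne (i : ι) : e i ≠ 0 := (he0 _).mpr ⟨i, rfl⟩
  have hsum (s : Finset ι) (n : ℕ) : ∑ x ∈ s.image e, x ^ n = ∑ i ∈ s, e i ^ n :=
    sum_image he.injOn
  refine Set.ncard_congr
    (fun v _ => (({i | v i = 1} : Finset ι).image e, ({i | v i = -1} : Finset ι).image e))
    ?_ ?_ ?_
  · rintro v ⟨⟨h1, h2, h3⟩, h4⟩
    rw [sum_zmod_three_smul, sub_eq_zero] at h1 h2 h3
    simp only [coe_biUnion, Set.mem_iUnion, mem_coe, HasAntidiagonal.mem_antidiagonal, exists_prop]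
    refine ⟨(#(image e {i | v i = 1}), #(image e {i | v i = -1})), ?_,
      mem_balancedPairs.mpr ⟨⟨?_, ?_, ?_, ?_, ?_, ?_⟩, rfl, rfl⟩⟩
    · simp only [card_image_of_injective _ he]
      rw [← h4, hammingNorm_zmod_three]
    · simp [hne]
    · simp [hne]
    · rw [disjoint_image he, disjoint_filter]
      intro i _ h
      rw [h]
      decide
    all_goals simpa only [hsum]
  · intro v w _ _ h
    obtain ⟨h1, h2⟩ := Prod.mk.inj h
    have h1 := image_injective he h1
    have h2 := image_injective he h2
    funext i
    have h1 := congrArg (i ∈ ·) h1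
    have h2 := congrArg (i ∈ ·) h2
    simp only [mem_filter, mem_univ, true_and, eq_iff_iff] at h1 h2
    generalize v i = a at *
    generalize w i = b at *
    revert a b
    decide
  · rintro ⟨P, N⟩ h
    simp only [coe_biUnion, Set.mem_iUnion, mem_coe, HasAntidiagonal.mem_antidiagonal, exists_prop,
      mem_balancedPairs] at h
    obtain ⟨ab, hab, ⟨h1, h2, h3, h4, h5, h6⟩, h7, h8⟩ := h
    let v : ι → ZMod 3 := fun i => if e i ∈ P then 1 else if e i ∈ N then -1 else 0
    have hP : ({i | v i = 1} : Finset ι).image e = P := by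
      ext x
      simp only [mem_image, mem_filter, mem_univ, true_and, v]
      constructor
      · rintro ⟨i, hi, rfl⟩
        by_contra hc
        rw [if_neg hc] at hi
        split_ifs at hi <;> revert hi <;> decide
      · intro hx
        obtain ⟨i, rfl⟩ := (he0 x).mp fun h => h1 (h ▸ hx)
        exact ⟨i, if_pos hx, rfl⟩
    have hN : ({i | v i = -1} : Finset ι).image e = N := by
      ext x
      simp only [mem_image, mem_filter, mem_univ, true_and, v]
      constructor
      · rintro ⟨i, hi, rfl⟩
        by_contra hc
        rw [if_neg hc] at hi
        split_ifs at hi <;> revert hi <;> decide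
      · intro hx
        obtain ⟨i, rfl⟩ := (he0 x).mp fun h => h2 (h ▸ hx)
        exact ⟨i, by rw [if_neg (Finset.disjoint_right.mp h3 hx), if_pos hx], rfl⟩
    refine ⟨v, ⟨?_, ?_⟩, by rw [hP, hN]⟩
    · rw [← hP, ← hN] at h4 h5 h6
      simp only [hsum] at h4 h5 h6
      simp only [sum_zmod_three_smul, sub_eq_zero]
      exact ⟨h4, h5, h6⟩
    · rw [hammingNorm_zmod_three, ← card_image_of_injective _ he, hP,
        ← card_image_of_injective _ he, hN, h7, h8, hab]

end Transfer

theorem dual_code_low_weights (m : ℕ) (hme : Even m) (hm0 : 0 < m)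
    (π : (GaloisField 3 m)ˣ)
    (hπ : ∀ u : (GaloisField 3 m)ˣ, u ∈ Subgroup.zpowers π) :
    let cw : GaloisField 3 m × GaloisField 3 m × GaloisField 3 m →
        Fin (3 ^ m - 1) → ZMod 3 := fun t i =>
      (Algebra.trace (ZMod 3) (GaloisField 3 m))
        (t.1 * (π : GaloisField 3 m) ^ (2 * (i : ℕ)) +
         t.2.1 * (π : GaloisField 3 m) ^ (4 * (i : ℕ)) +
         t.2.2 * (π : GaloisField 3 m) ^ (10 * (i : ℕ)))
    let A' : ℕ → ℕ := fun j =>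
      {v : Fin (3 ^ m - 1) → ZMod 3 |
        (∀ t : GaloisField 3 m × GaloisField 3 m × GaloisField 3 m,
          ∑ i, v i * cw t i = 0) ∧ hammingNorm v = j}.ncard
    A' 0 = 1 ∧ A' 1 = 0 ∧ A' 2 = 3 ^ m - 1 ∧ A' 3 = 0 ∧
      A' 4 = (3 ^ m - 1) * (2 * 3 ^ m - 6) / 3 + (3 ^ m - 1) * (3 ^ m - 3) / 2 := by
  intro cw A'
  classical
  have : Fintype (GaloisField 3 m) := Fintype.ofFinite _
  have hcard : Fintype.card (GaloisField 3 m) = 3 ^ m := by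
    rw [← Nat.card_eq_fintype_card, GaloisField.card 3 m hm0.ne']
  have hord : orderOf π = 3 ^ m - 1 := by
    rw [orderOf_eq_card_of_forall_mem_zpowers hπ, Nat.card_eq_fintype_card, Fintype.card_units,
      hcard]
  have hA (j : ℕ) : A' j =
      ∑ ab ∈ antidiagonal j, #(balancedPairs (GaloisField 3 m) ab.1 ab.2) := by
    rw [← ncard_power_sums_eq_zero
      (fun i : Fin (3 ^ m - 1) => (π : GaloisField 3 m) ^ (i : ℕ))]
    · simp only [A', cw, forall_sum_mul_trace_eq_zero_iff, ← pow_mul, mul_comm]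
    · intro i i' h
      have h : π ^ (i : ℕ) = π ^ (i' : ℕ) := Units.ext (by simpa using h)
      exact Fin.ext (pow_injOn_Iio_orderOf (by simp [hord]) (by simp [hord]) h)
    · intro x
      constructor
      · intro hx
        obtain ⟨n, hn, hnx⟩ := (mem_zpowers_iff_mem_range_orderOf (x := π)).mp
          (hπ (Units.mk0 x hx)) |> mem_image.mp
        refine ⟨⟨n, by simpa [hord] using hn⟩, ?_⟩
        simpa using congrArg Units.val hnx
      · rintro ⟨i, rfl⟩
        exact pow_ne_zero _ π.ne_zero
  have h22 := two_mul_card_balancedPairs_two_two (K := GaloisField 3 m)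
  have h40 := three_mul_card_balancedPairs_four_zero (K := GaloisField 3 m)
  rw [hcard] at h22 h40
  refine ⟨?_, ?_, ?_, ?_, ?_⟩
  · simp [hA, card_balancedPairs_zero_zero]
  · simp [hA, Nat.antidiagonal_succ, card_balancedPairs_one_zero,
      card_balancedPairs_comm 0 1]
  · simp [hA, Nat.antidiagonal_succ, card_balancedPairs_two_zero, card_balancedPairs_one_one,
      card_balancedPairs_comm 0 2, hcard]
  · simp [hA, Nat.antidiagonal_succ, card_balancedPairs_three_zero, card_balancedPairs_two_one,
      card_balancedPairs_comm 0 3, card_balancedPairs_comm 1 2]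
  · have h6 : (3 ^ m - 1) * (2 * 3 ^ m - 6) = 2 * ((3 ^ m - 1) * (3 ^ m - 3)) := by
      rw [show 2 * 3 ^ m - 6 = 2 * (3 ^ m - 3) by omega]
      ring
    rw [h6, ← h22, Nat.mul_div_cancel_left _ two_pos, h22, ← h40]
    simp only [hA, Nat.antidiagonal_succ, Nat.antidiagonal_zero, map_singleton, cons_eq_insert]
    simp [card_balancedPairs_three_one, card_balancedPairs_comm 0 4, card_balancedPairs_comm 1 3]
    omega
end

section
/- Let p = 3 and q = p^m where m ≥ 6 is an even integer. Set A_2' = p^m − 1 and A_4' = (p^m−1)(2p^m−p−3)/3 + (p^m−1)(p^m−3)/2, and define a = [ p^{3m−2}·((p^m−1)(p^m−2)(p−1)² + 2A_2') − p^{2(m−1)}(p−1)²(p^{3m}−2p^{2m}+1) + (p−1)(p^m−1)p^{3m−1} ] / ((p−1)²·p^{m−2}) and b = [ p^{3m−4}·((p^m−1)(p^m−2)(p^m−3)(p^m−4)(p−1)⁴ + 12A_2'(p^m−3)(p^m−4)(p−1)² + 24A_4') − (p−1)⁵·p^{3(m−1)}·a − p^{4(m−1)}(p−1)⁴(p^{3m}−4p^{2m}−16p^m+19)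 + 6·((p−1)³·p^{2(m−1)}·a + p^{3(m−1)}(p−1)³(p^{3m}−p^{2m+1}−4p^m+6)) − 11·((p−1)²·p^{m−2}·a + p^{2(m−1)}(p−1)²(p^{3m}−2p^{2m}+1)) + 6·(p−1)(p^m−1)p^{3m−1} ] / ((p−1)⁴·p^{2m−4}). Then n_{1,0} + n_{−1,0} + p²(n_{1,2}+n_{−1,2}) + p⁴(n_{1,4}+n_{−1,4}) = a and n_{1,0} + n_{−1,0} + p⁴(n_{1,2}+n_{−1,2}) + p⁸(n_{1,4}+n_{−1,4}) = b. -/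
open Complex Finset

/-- The quadratic form `α x² + β x⁴ + γ x¹⁰` attached to a triple `(α, β, γ)`. -/
def ternaryForm {F : Type*} [Field F] (t : F × F × F) (x : F) : F :=
  t.1 * x ^ 2 + t.2.1 * x ^ 4 + t.2.2 * x ^ 10

/-- The exponential sum of `ternaryForm t` with respect to an additive character. -/
noncomputable def charSum {F : Type*} [Field F] [Fintype F] (ψ : AddChar F ℂ) (t : F × F × F) : ℂ :=
  ∑ x, ψ (ternaryForm t x)

section CharacterSums

variable {F : Type*} [Field F] {ψ : AddChar F ℂ}

lemma ternaryForm_zero (t : F × F × F) : ternaryForm t 0 = 0 := by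
  simp [ternaryForm]

lemma ternaryForm_neg (t : F × F × F) (x : F) : ternaryForm t (-x) = ternaryForm t x := by
  simp only [ternaryForm]; ring

lemma three_eq_zero_of_charP_s2 [CharP F 3] : (3 : F) = 0 := by
  exact_mod_cast CharP.cast_eq_zero F 3

lemma two_ne_zero_of_charP_three [CharP F 3] : (2 : F) ≠ 0 := fun h =>
  one_ne_zero (α := F) (by linear_combination three_eq_zero_of_charP_s2 (F := F) - h)

lemma add_cube_of_charP [CharP F 3] (x y : F) : (x + y) ^ 3 = x ^ 3 + y ^ 3 := by
  have : Fact (Nat.Prime 3) := ⟨by norm_num⟩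
  exact add_pow_char x y 3

/-- The polar form of `ternaryForm`. -/
def polarForm (t : F × F × F) (x y : F) : F :=
  2 * t.1 * x * y + t.2.1 * (x ^ 3 * y + x * y ^ 3) + t.2.2 * (x ^ 9 * y + x * y ^ 9)

lemma pow_nine_eq (x : F) : x ^ 9 = (x ^ 3) ^ 3 := by ring

lemma ternaryForm_add [CharP F 3] (t : F × F × F) (x y : F) :
    ternaryForm t (x + y) = ternaryForm t x + polarForm t x y + ternaryForm t y := by
  have h3 := add_cube_of_charP x y
  have h9 : (x + y) ^ 9 = x ^ 9 + y ^ 9 := by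
    rw [pow_nine_eq, h3, add_cube_of_charP]; ring
  have h4 : (x + y) ^ 4 = (x + y) * (x ^ 3 + y ^ 3) := by rw [← h3]; ring
  have h10 : (x + y) ^ 10 = (x + y) * (x ^ 9 + y ^ 9) := by rw [← h9]; ring
  simp only [ternaryForm, polarForm, h4, h10]
  ring

lemma polarForm_add_right [CharP F 3] (t : F × F × F) (x y z : F) :
    polarForm t x (y + z) = polarForm t x y + polarForm t x z := by
  have h3 := add_cube_of_charP y z
  have h9 : (y + z) ^ 9 = y ^ 9 + z ^ 9 := by
    rw [pow_nine_eq, h3, add_cube_of_charP]; ring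
  simp only [polarForm, h3, h9]
  ring

lemma polarForm_comm (t : F × F × F) (x y : F) : polarForm t x y = polarForm t y x := by
  simp only [polarForm]; ring

/-- The additive character `y ↦ ψ (polarForm t x y)`. -/
def polarChar [CharP F 3] (ψ : AddChar F ℂ) (t : F × F × F) (x : F) : AddChar F ℂ where
  toFun y := ψ (polarForm t x y)
  map_zero_eq_one' := by simp [polarForm]
  map_add_eq_mul' y z := by rw [polarForm_add_right, AddChar.map_add_eq_mul]

/-- The radical of `ternaryForm t` with respect to `ψ`. -/
def formRadical [CharP F 3] (ψ : AddChar F ℂ) (t : F × F × F) : AddSubgroup F where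
  carrier := {x | ∀ y, ψ (polarForm t x y) = 1}
  zero_mem' := by intro y; simp [polarForm]
  add_mem' := by
    intro x z hx hz y
    rw [polarForm_comm, polarForm_add_right, AddChar.map_add_eq_mul, polarForm_comm t y x,
      polarForm_comm t y z, hx y, hz y, one_mul]
  neg_mem' := by
    intro x hx y
    have h : polarForm t (-x) y = polarForm t x (-y) := by simp only [polarForm]; ring
    rw [h]; exact hx _

lemma psi_ternaryForm_eq_one [CharP F 3] {t : F × F × F} {x : F} (hx : x ∈ formRadical ψ t) :
    ψ (ternaryForm t x) = 1 := by
  have h : ternaryForm t x = polarForm t x x + polarForm t x x := by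
    simp only [ternaryForm, polarForm]
    linear_combination (-(t.1 * x ^ 2 + t.2.1 * x ^ 4 + t.2.2 * x ^ 10)) *
      three_eq_zero_of_charP_s2 (F := F)
  rw [h, AddChar.map_add_eq_mul, hx x, one_mul]

variable [Fintype F]

lemma conj_charSum (ψ : AddChar F ℂ) (t : F × F × F) :
    (starRingEnd ℂ) (charSum ψ t) = ∑ x, ψ (-ternaryForm t x) := by
  simp only [charSum, map_sum, AddChar.map_neg_eq_conj]

open Classical in
lemma charSum_mul_conj [CharP F 3] (ψ : AddChar F ℂ) (t : F × F × F) :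
    charSum ψ t * (starRingEnd ℂ) (charSum ψ t)
      = Fintype.card F * Nat.card (formRadical ψ t) := by
  have h1 : charSum ψ t * (starRingEnd ℂ) (charSum ψ t)
      = ∑ y, ∑ x, ψ (ternaryForm t x) * ψ (polarForm t x y) := by
    rw [conj_charSum, mul_comm, Finset.sum_mul]
    refine Finset.sum_congr rfl fun y _ => ?_
    rw [charSum, Finset.mul_sum, ← Equiv.sum_comp (Equiv.addRight y)]
    refine Finset.sum_congr rfl fun x _ => ?_
    rw [← AddChar.map_add_eq_mul, ← AddChar.map_add_eq_mul, Equiv.coe_addRight, ternaryForm_add]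
    congr 1; ring
  have h2 (x : F) : ∑ y, ψ (ternaryForm t x) * ψ (polarForm t x y)
      = if x ∈ formRadical ψ t then (Fintype.card F : ℂ) else 0 := by
    have h3 : ∑ y, ψ (polarForm t x y) = if polarChar ψ t x = 0 then (Fintype.card F : ℂ) else 0 :=
      AddChar.sum_eq_ite (polarChar ψ t x)
    have h4 : polarChar ψ t x = 0 ↔ x ∈ formRadical ψ t := DFunLike.ext_iff
    rw [← Finset.mul_sum, h3]
    by_cases hx : x ∈ formRadical ψ t
    · rw [psi_ternaryForm_eq_one hx, if_pos (h4.2 hx), if_pos hx, one_mul]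
    · rw [if_neg (mt h4.1 hx), if_neg hx, mul_zero]
  rw [h1, Finset.sum_comm, Finset.sum_congr rfl fun x _ => h2 x, ← Finset.sum_filter,
    Finset.sum_const, nsmul_eq_mul, mul_comm, Nat.card_eq_fintype_card, ← Fintype.card_subtype]

open Polynomial in
lemma card_formRadical_le [CharP F 3] (hψ : ψ.IsPrimitive) (hfrob : ∀ z, ψ (z ^ 3) = ψ z)
    {t : F × F × F} (ht : t ≠ 0) : Nat.card (formRadical ψ t) ≤ 81 := by
  classical
  have : Fact (Nat.Prime 3) := ⟨by norm_num⟩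
  have hfrob9 (z : F) : ψ (z ^ 9) = ψ z := by rw [pow_nine_eq, hfrob, hfrob]
  let L : F[X] := C (t.2.2 ^ 9) * X ^ 81 + C (t.2.1 ^ 9) * X ^ 27 + C (2 * t.1 ^ 9) * X ^ 9
    + C (t.2.1 ^ 3) * X ^ 3 + C t.2.2 * X
  have h2 := two_ne_zero_of_charP_three (F := F)
  have hL : L ≠ 0 := by
    intro h
    apply ht
    have c1 := congrArg (fun P : F[X] => P.coeff 9) h
    have c2 := congrArg (fun P : F[X] => P.coeff 3) h
    have c3 := congrArg (fun P : F[X] => P.coeff 1) h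
    simp [L, coeff_C_mul, coeff_X_pow, h2, -map_pow, -map_mul] at c1 c2 c3
    ext <;> simp [*]
  have hdeg : L.natDegree ≤ 81 := by
    simp only [L]; compute_degree
  have hroot (x : F) (hx : x ∈ formRadical ψ t) : x ∈ L.roots.toFinset := by
    rw [Multiset.mem_toFinset, mem_roots hL, IsRoot.def]
    by_contra hne
    refine hψ hne ?_
    ext z
    obtain ⟨y, rfl⟩ : ∃ y : F, y ^ 9 = z := by
      obtain ⟨u, hu⟩ := surjective_frobenius F 3 z
      obtain ⟨v, hv⟩ := surjective_frobenius F 3 u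
      exact ⟨v, by rw [pow_nine_eq, ← hu, ← hv]; rfl⟩
    rw [AddChar.mulShift_apply, AddChar.one_apply, ← hx y]
    have e1 : eval x L * y ^ 9 = (t.2.2 * x ^ 9 * y) ^ 9 + (t.2.1 * x ^ 3 * y) ^ 9
        + 2 * (t.1 * x * y) ^ 9 + (t.2.1 * x * y ^ 3) ^ 3 + t.2.2 * x * y ^ 9 := by
      simp only [L, eval_add, eval_mul, eval_C, eval_pow, eval_X]; ring
    have e2 : polarForm t x y = t.2.2 * x ^ 9 * y + t.2.1 * x ^ 3 * y
        + 2 * (t.1 * x * y) + t.2.1 * x * y ^ 3 + t.2.2 * x * y ^ 9 := by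
      simp only [polarForm]; ring
    rw [e1, e2, two_mul, two_mul]
    simp only [AddChar.map_add_eq_mul, hfrob, hfrob9]
  calc Nat.card (formRadical ψ t) = (Finset.univ.filter (· ∈ formRadical ψ t)).card := by
        rw [Nat.card_eq_fintype_card, ← Fintype.card_subtype]
    _ ≤ L.roots.toFinset.card := Finset.card_le_card fun x hx => hroot x (by simpa using hx)
    _ ≤ L.roots.card := Multiset.toFinset_card_le _
    _ ≤ 81 := (card_roots' L).trans hdeg

lemma exists_charSum_mul_conj [CharP F 3] {m : ℕ} (hcard : Fintype.card F = 3 ^ m)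
    (hψ : ψ.IsPrimitive) (hfrob : ∀ z, ψ (z ^ 3) = ψ z) {t : F × F × F} (ht : t ≠ 0) :
    ∃ d ≤ 4, charSum ψ t * (starRingEnd ℂ) (charSum ψ t) = 3 ^ (m + d) := by
  have hdvd : Nat.card (formRadical ψ t) ∣ 3 ^ m := by
    rw [← hcard, ← Nat.card_eq_fintype_card]; exact AddSubgroup.card_addSubgroup_dvd_card _
  obtain ⟨d, -, hd⟩ := (Nat.dvd_prime_pow Nat.prime_three).1 hdvd
  have hle := card_formRadical_le hψ hfrob ht
  refine ⟨d, ?_, ?_⟩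
  · by_contra! h
    have : 3 ^ 5 ≤ 3 ^ d := Nat.pow_le_pow_right (by norm_num) h
    omega
  · rw [charSum_mul_conj, hd, hcard]; push_cast; ring

end CharacterSums

lemma three_dvd_of_sq_add_three_mul_sq {u c k : ℤ} (h : u ^ 2 + 3 * c ^ 2 = 3 * k) : 3 ∣ u :=
  Int.prime_three.dvd_of_dvd_pow (n := 2) ⟨k - c ^ 2, by linarith⟩

lemma eq_of_sq_add_three_mul_sq_eq_three_pow (n : ℕ) (u c : ℤ) (h : u ^ 2 + 3 * c ^ 2 = 3 ^ n) :
    (∃ k, n = 2 * k ∧ c = 0 ∧ (u = 3 ^ k ∨ u = -3 ^ k)) ∨ u = 0 := by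
  induction n using Nat.twoStepInduction generalizing u c with
  | zero =>
    have hc : c = 0 := by
      by_contra hc
      have : 0 < c ^ 2 := by positivity
      nlinarith [sq_nonneg u]
    subst hc
    exact Or.inl ⟨0, rfl, rfl, by simpa using h⟩
  | one =>
    obtain ⟨v, rfl⟩ := three_dvd_of_sq_add_three_mul_sq (k := 1) (by simpa using h)
    right
    by_contra hv
    have : 0 < v ^ 2 := by
      have : v ≠ 0 := by rintro rfl; simp at hv
      positivity
    nlinarith [sq_nonneg c]
  | more n ih _ =>
    obtain ⟨v, rfl⟩ := three_dvd_of_sq_add_three_mul_sq (k := 3 ^ (n + 1)) (by rw [h]; ring)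
    have h' : c ^ 2 + 3 * v ^ 2 = 3 * 3 ^ n := by
      have : (3 : ℤ) ^ (n + 2) = 9 * 3 ^ n := by ring
      linarith
    obtain ⟨w, rfl⟩ := three_dvd_of_sq_add_three_mul_sq h'
    rcases ih v w (by linarith) with ⟨k, rfl, rfl, hk⟩ | rfl
    · refine Or.inl ⟨k + 1, by ring, by simp, ?_⟩
      rcases hk with rfl | rfl
      · left; ring
      · right; ring
    · right; simp

lemma two_dvd_card_of_neg_mem {F : Type*} [Field F] (h2 : (2 : F) ≠ 0) (s : Finset F)
    (h0 : (0 : F) ∉ s) (hneg : ∀ x ∈ s, -x ∈ s) : 2 ∣ s.card := by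
  have h : ∑ _x ∈ s, (1 : ZMod 2) = 0 := by
    refine Finset.sum_involution (fun x _ => -x) (fun _ _ => by decide) (fun x hx _ he => ?_)
      hneg (fun x _ => neg_neg x)
    have hx0 : 2 * x = 0 := by linear_combination -he
    rcases mul_eq_zero.1 hx0 with h | rfl
    · exact h2 h
    · exact h0 hx
  rw [← ZMod.natCast_eq_zero_iff]
  simpa using h

lemma zetaPow_three_zero : zetaPow 3 0 = 1 := by simp [zetaPow]

lemma zetaPow_three_one : zetaPow 3 1 = -1 / 2 + Real.sqrt 3 / 2 * I := by
  have h : zetaPow 3 1 = Complex.exp (((2 * Real.pi / 3 : ℝ) : ℂ) * I) := by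
    rw [zetaPow, show (1 : ZMod 3).val = 1 from rfl]
    congr 1; push_cast; ring
  have h2 : 2 * Real.pi / 3 = Real.pi - Real.pi / 3 := by ring
  rw [h, Complex.exp_mul_I, ← Complex.ofReal_cos, ← Complex.ofReal_sin, h2, Real.cos_pi_sub,
    Real.sin_pi_sub, Real.cos_pi_div_three, Real.sin_pi_div_three]
  push_cast; ring

lemma zetaPow_three_two : zetaPow 3 2 = -1 / 2 - Real.sqrt 3 / 2 * I := by
  have h : zetaPow 3 2 = Complex.exp (((4 * Real.pi / 3 : ℝ) : ℂ) * I) := by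
    rw [zetaPow, show (2 : ZMod 3).val = 2 from rfl]
    congr 1; push_cast; ring
  have h2 : 4 * Real.pi / 3 = Real.pi / 3 + Real.pi := by ring
  rw [h, Complex.exp_mul_I, ← Complex.ofReal_cos, ← Complex.ofReal_sin, h2, Real.cos_add_pi,
    Real.sin_add_pi, Real.cos_pi_div_three, Real.sin_pi_div_three]
  push_cast; ring

/-- The sum of cube roots of unity along an even function lies in `ℤ[√-3]`. -/
lemma exists_sum_zetaPow_eq {F : Type*} [Field F] [Fintype F] (h2 : (2 : F) ≠ 0)
    (T : F → ZMod 3) (h0 : T 0 = 0) (hneg : ∀ x, T (-x) = T x) :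
    ∃ u c : ℤ, ∑ x, zetaPow 3 (T x) = u + c * (Real.sqrt 3 * I) := by
  classical
  have hsum : ∑ x, zetaPow 3 (T x)
      = ∑ k : ZMod 3, ((Finset.univ.filter fun x => T x = k).card : ℂ) * zetaPow 3 k := by
    rw [← Finset.sum_fiberwise Finset.univ T]
    refine Finset.sum_congr rfl fun k _ => ?_
    rw [Finset.sum_congr rfl fun x hx => by rw [(Finset.mem_filter.1 hx).2], Finset.sum_const,
      nsmul_eq_mul]
  have heven (k : ZMod 3) (hk : k ≠ 0) : 2 ∣ (Finset.univ.filter fun x => T x = k).card :=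
    two_dvd_card_of_neg_mem h2 _ (by simpa [h0] using hk.symm) (by simp [hneg])
  obtain ⟨a, ha⟩ := heven 1 (by decide)
  obtain ⟨b, hb⟩ := heven 2 (by decide)
  refine ⟨(Finset.univ.filter fun x => T x = 0).card - a - b, a - b, ?_⟩
  rw [hsum, show (Finset.univ : Finset (ZMod 3)) = {0, 1, 2} from rfl, Finset.sum_insert (by decide),
    Finset.sum_insert (by decide), Finset.sum_singleton, ha, hb, zetaPow_three_zero,
    zetaPow_three_one, zetaPow_three_two]
  push_cast
  ring

lemma eq_three_pow_or_conj_eq_neg {S : ℂ} {u c : ℤ} {n : ℕ} (hS : S = u + c * (Real.sqrt 3 * I))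
    (hn : S * (starRingEnd ℂ) S = 3 ^ n) :
    (∃ k, n = 2 * k ∧ (S = 3 ^ k ∨ S = -3 ^ k)) ∨ (starRingEnd ℂ) S = -S := by
  have hconj : (starRingEnd ℂ) S = u - c * (Real.sqrt 3 * I) := by
    rw [hS]; simp; ring
  have h3 : ((Real.sqrt 3 : ℝ) : ℂ) ^ 2 = 3 := by
    rw [← Complex.ofReal_pow, Real.sq_sqrt (by norm_num)]; simp
  have hnorm_int : u ^ 2 + 3 * c ^ 2 = 3 ^ n := by
    have : (u : ℂ) ^ 2 + 3 * (c : ℂ) ^ 2 = 3 ^ n := by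
      rw [← hn, hconj, hS]
      linear_combination (-(c : ℂ) ^ 2) * h3 + c ^ 2 * (Real.sqrt 3 : ℂ) ^ 2 * Complex.I_sq
    exact_mod_cast this
  rcases eq_of_sq_add_three_mul_sq_eq_three_pow n u c hnorm_int with ⟨k, hk, rfl, hu⟩ | rfl
  · refine Or.inl ⟨k, hk, ?_⟩
    rcases hu with rfl | rfl <;> simp [hS]
  · right; rw [hconj, hS]; simp

section Moments

variable {F : Type*} [Field F] [Fintype F] {ψ : AddChar F ℂ}

open Classical in
lemma sum_sum_psi_eq_card (hψ : ψ.IsPrimitive) {ι : Type*} [Fintype ι] (f g h : ι → F) :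
    ∑ t : F × F × F, ∑ i, ψ (t.1 * f i + t.2.1 * g i + t.2.2 * h i)
      = Fintype.card F ^ 3 * ∑ i, if f i = 0 ∧ g i = 0 ∧ h i = 0 then (1 : ℂ) else 0 := by
  have hsum (c : F) : ∑ a, ψ (a * c) = if c = 0 then (Fintype.card F : ℂ) else 0 := by
    simpa using AddChar.sum_mulShift c hψ
  rw [Finset.sum_comm, Finset.mul_sum]
  refine Finset.sum_congr rfl fun i _ => ?_
  simp only [Fintype.sum_prod_type, AddChar.map_add_eq_mul, ← Finset.mul_sum, ← Finset.sum_mul,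
    hsum]
  by_cases h1 : f i = 0 <;> by_cases h2 : g i = 0 <;> by_cases h3 : h i = 0 <;>
    simp [h1, h2, h3]
  ring

open Classical in
lemma sum_charSum_sq (hψ : ψ.IsPrimitive) :
    ∑ t, charSum ψ t ^ 2 = Fintype.card F ^ 3 * ∑ i : F × F,
      if i.1 ^ 2 + i.2 ^ 2 = 0 ∧ i.1 ^ 4 + i.2 ^ 4 = 0 ∧ i.1 ^ 10 + i.2 ^ 10 = 0
      then (1 : ℂ) else 0 := by
  rw [← sum_sum_psi_eq_card hψ]
  refine Finset.sum_congr rfl fun t _ => ?_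
  rw [sq, charSum, Finset.sum_mul_sum, Fintype.sum_prod_type]
  refine Finset.sum_congr rfl fun x _ => Finset.sum_congr rfl fun y _ => ?_
  rw [← AddChar.map_add_eq_mul]
  congr 1; simp only [ternaryForm]; ring

open Classical in
lemma sum_charSum_mul_conj (hψ : ψ.IsPrimitive) :
    ∑ t, charSum ψ t * (starRingEnd ℂ) (charSum ψ t) = Fintype.card F ^ 3 * ∑ i : F × F,
      if i.1 ^ 2 - i.2 ^ 2 = 0 ∧ i.1 ^ 4 - i.2 ^ 4 = 0 ∧ i.1 ^ 10 - i.2 ^ 10 = 0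
      then (1 : ℂ) else 0 := by
  rw [← sum_sum_psi_eq_card hψ]
  refine Finset.sum_congr rfl fun t _ => ?_
  rw [conj_charSum, charSum, Finset.sum_mul_sum, Fintype.sum_prod_type]
  refine Finset.sum_congr rfl fun x _ => Finset.sum_congr rfl fun y _ => ?_
  rw [← AddChar.map_add_eq_mul]
  congr 1; simp only [ternaryForm]; ring

lemma pow_three_mul_sum {ι : Type*} [Fintype ι] (f g : ι → ℂ) :
    (∑ x, f x) ^ 3 * ∑ x, g x
      = ∑ i : (ι × ι) × ι × ι, f i.1.1 * f i.1.2 * (f i.2.1 * g i.2.2) := by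
  simp only [Fintype.sum_prod_type, ← Finset.mul_sum, ← Finset.sum_mul]
  ring

open Classical in
lemma sum_charSum_pow_four (hψ : ψ.IsPrimitive) :
    ∑ t, charSum ψ t ^ 4 = Fintype.card F ^ 3 * ∑ i : (F × F) × F × F,
      if i.1.1 ^ 2 + i.1.2 ^ 2 + i.2.1 ^ 2 + i.2.2 ^ 2 = 0
        ∧ i.1.1 ^ 4 + i.1.2 ^ 4 + i.2.1 ^ 4 + i.2.2 ^ 4 = 0
        ∧ i.1.1 ^ 10 + i.1.2 ^ 10 + i.2.1 ^ 10 + i.2.2 ^ 10 = 0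
      then (1 : ℂ) else 0 := by
  rw [← sum_sum_psi_eq_card hψ]
  refine Finset.sum_congr rfl fun t _ => ?_
  rw [pow_succ, charSum, pow_three_mul_sum]
  refine Finset.sum_congr rfl fun i _ => ?_
  simp only [← AddChar.map_add_eq_mul]
  congr 1; simp only [ternaryForm]; ring

open Classical in
lemma sum_charSum_cube_mul_conj (hψ : ψ.IsPrimitive) :
    ∑ t, charSum ψ t ^ 3 * (starRingEnd ℂ) (charSum ψ t)
      = Fintype.card F ^ 3 * ∑ i : (F × F) × F × F,
      if i.1.1 ^ 2 + i.1.2 ^ 2 + i.2.1 ^ 2 - i.2.2 ^ 2 = 0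
        ∧ i.1.1 ^ 4 + i.1.2 ^ 4 + i.2.1 ^ 4 - i.2.2 ^ 4 = 0
        ∧ i.1.1 ^ 10 + i.1.2 ^ 10 + i.2.1 ^ 10 - i.2.2 ^ 10 = 0
      then (1 : ℂ) else 0 := by
  rw [← sum_sum_psi_eq_card hψ]
  refine Finset.sum_congr rfl fun t _ => ?_
  rw [conj_charSum, charSum, pow_three_mul_sum]
  refine Finset.sum_congr rfl fun i _ => ?_
  simp only [← AddChar.map_add_eq_mul]
  congr 1; simp only [ternaryForm]; ring

end Moments

section Counting

variable {F : Type*} [Field F]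

lemma add_powers_eq_zero_iff [CharP F 3] (x y : F) :
    (x ^ 2 + y ^ 2 = 0 ∧ x ^ 4 + y ^ 4 = 0 ∧ x ^ 10 + y ^ 10 = 0) ↔ x = 0 ∧ y = 0 := by
  constructor
  · rintro ⟨h1, h2, -⟩
    have hx : x = 0 := by
      have : 2 * x ^ 4 = 0 := by linear_combination h2 + (x ^ 2 - y ^ 2) * h1
      simpa [two_ne_zero_of_charP_three] using this
    subst hx
    exact ⟨rfl, by simpa using h1⟩
  · rintro ⟨rfl, rfl⟩; simp

lemma sub_powers_eq_zero_iff (x y : F) :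
    (x ^ 2 - y ^ 2 = 0 ∧ x ^ 4 - y ^ 4 = 0 ∧ x ^ 10 - y ^ 10 = 0) ↔ x ^ 2 = y ^ 2 := by
  constructor
  · rintro ⟨h, -⟩; exact sub_eq_zero.1 h
  · intro h
    refine ⟨sub_eq_zero.2 h, ?_, ?_⟩
    · linear_combination (x ^ 2 + y ^ 2) * h
    · linear_combination (x ^ 8 + x ^ 6 * y ^ 2 + x ^ 4 * y ^ 4 + x ^ 2 * y ^ 6 + y ^ 8) * h

lemma power_sums_sub_eq_zero_iff [CharP F 3] (x y z w : F) :
    (x ^ 2 + y ^ 2 + z ^ 2 - w ^ 2 = 0 ∧ x ^ 4 + y ^ 4 + z ^ 4 - w ^ 4 = 0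
      ∧ x ^ 10 + y ^ 10 + z ^ 10 - w ^ 10 = 0) ↔
    (w = 0 ∧ x ^ 2 = y ^ 2 ∧ x ^ 2 = z ^ 2) ∨ (x = 0 ∧ y = 0 ∧ z ^ 2 = w ^ 2)
      ∨ (x = 0 ∧ z = 0 ∧ y ^ 2 = w ^ 2) ∨ (y = 0 ∧ z = 0 ∧ x ^ 2 = w ^ 2) := by
  have h3 := three_eq_zero_of_charP_s2 (F := F)
  constructor
  · rintro ⟨h1, h2, h5⟩
    have hw : w ^ 2 = x ^ 2 + y ^ 2 + z ^ 2 := by linear_combination -h1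
    have he : x ^ 2 * y ^ 2 + y ^ 2 * z ^ 2 + z ^ 2 * x ^ 2 = 0 := by
      have h : 2 * (x ^ 2 * y ^ 2 + y ^ 2 * z ^ 2 + z ^ 2 * x ^ 2) = 0 := by
        linear_combination -h2 - (w ^ 2 + x ^ 2 + y ^ 2 + z ^ 2) * hw
      exact (mul_eq_zero.1 h).resolve_left two_ne_zero_of_charP_three
    have hprod : w ^ 4 * (x ^ 2 * y ^ 2 * z ^ 2) = 0 := by
      have h : 2 * (w ^ 4 * (x ^ 2 * y ^ 2 * z ^ 2)) = 0 := by
        rw [show w ^ 10 = (w ^ 2) ^ 5 by ring, hw] at h5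
        rw [show w ^ 4 = (w ^ 2) ^ 2 by ring, hw]
        linear_combination h5 - ((x ^ 2 + y ^ 2 + z ^ 2) ^ 2 * (x ^ 2 * y ^ 2 * z ^ 2)) * h3
          - 5 * (-(x ^ 2 + y ^ 2 + z ^ 2) ^ 3 + (x ^ 2 + y ^ 2 + z ^ 2)
            * (x ^ 2 * y ^ 2 + y ^ 2 * z ^ 2 + z ^ 2 * x ^ 2) - x ^ 2 * y ^ 2 * z ^ 2) * he
      exact (mul_eq_zero.1 h).resolve_left two_ne_zero_of_charP_three
    have hcases : w = 0 ∨ (x = 0 ∨ y = 0) ∨ z = 0 := by simpa using hprod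
    rcases hcases with rfl | (rfl | rfl) | rfl
    · left
      have hxy : x ^ 2 = y ^ 2 := by
        have h : (x ^ 2 - y ^ 2) ^ 2 = 0 := by
          linear_combination -he - (x ^ 2 + y ^ 2) * hw - x ^ 2 * y ^ 2 * h3
        exact sub_eq_zero.1 (pow_eq_zero_iff two_ne_zero |>.1 h)
      exact ⟨rfl, hxy, by linear_combination hw - hxy + x ^ 2 * h3⟩
    · have hyz : y = 0 ∨ z = 0 := by simpa using he
      rcases hyz with rfl | rfl
      · right; left; exact ⟨rfl, rfl, by linear_combination -hw⟩
      · right; right; left; exact ⟨rfl, rfl, by linear_combination -hw⟩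
    · have hxz : z = 0 ∨ x = 0 := by simpa using he
      rcases hxz with rfl | rfl
      · right; right; right; exact ⟨rfl, rfl, by linear_combination -hw⟩
      · right; left; exact ⟨rfl, rfl, by linear_combination -hw⟩
    · have hxy : x = 0 ∨ y = 0 := by simpa using he
      rcases hxy with rfl | rfl
      · right; right; left; exact ⟨rfl, rfl, by linear_combination -hw⟩
      · right; right; right; exact ⟨rfl, rfl, by linear_combination -hw⟩
  · have e4 (v : F) : v ^ 4 = (v ^ 2) ^ 2 := by ring
    have e10 (v : F) : v ^ 10 = (v ^ 2) ^ 5 := by ring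
    rintro (⟨rfl, h, h'⟩ | ⟨rfl, rfl, h⟩ | ⟨rfl, rfl, h⟩ | ⟨rfl, rfl, h⟩)
    · simp only [e4, e10, ← h, ← h']
      refine ⟨?_, ?_, ?_⟩
      · linear_combination x ^ 2 * h3
      · linear_combination x ^ 4 * h3
      · linear_combination x ^ 10 * h3
    all_goals simp [e4, e10, h]

lemma power_sums_eq_zero_iff [CharP F 3] (x y z w : F) :
    (x ^ 2 + y ^ 2 + z ^ 2 + w ^ 2 = 0 ∧ x ^ 4 + y ^ 4 + z ^ 4 + w ^ 4 = 0
      ∧ x ^ 10 + y ^ 10 + z ^ 10 + w ^ 10 = 0) ↔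
    (z ^ 2 = (x - y) ^ 2 ∧ w ^ 2 = (x + y) ^ 2) ∨ (z ^ 2 = (x + y) ^ 2 ∧ w ^ 2 = (x - y) ^ 2) := by
  have h3 := three_eq_zero_of_charP_s2 (F := F)
  constructor
  · rintro ⟨h1, h2, -⟩
    have hw : w ^ 2 = -(x ^ 2 + y ^ 2 + z ^ 2) := by linear_combination h1
    have hprod : (z ^ 2 - (x - y) ^ 2) * (z ^ 2 - (x + y) ^ 2) = 0 := by
      have h : 2 * ((z ^ 2 - (x - y) ^ 2) * (z ^ 2 - (x + y) ^ 2)) = 0 := by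
        linear_combination h2 + (x ^ 2 + y ^ 2 + z ^ 2 - w ^ 2) * hw
          - 2 * (x ^ 2 * z ^ 2 + y ^ 2 * z ^ 2 + x ^ 2 * y ^ 2) * h3
      exact (mul_eq_zero.1 h).resolve_left two_ne_zero_of_charP_three
    rcases mul_eq_zero.1 hprod with h | h
    · left
      exact ⟨sub_eq_zero.1 h, by linear_combination hw - h - (x ^ 2 + y ^ 2) * h3⟩
    · right
      exact ⟨sub_eq_zero.1 h, by linear_combination hw - h - (x ^ 2 + y ^ 2) * h3⟩
  · have e4 (v : F) : v ^ 4 = (v ^ 2) ^ 2 := by ring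
    have e10 (v : F) : v ^ 10 = (v ^ 2) ^ 5 := by ring
    rintro (⟨hz, hw⟩ | ⟨hz, hw⟩) <;>
    · rw [e4 z, e4 w, e10 z, e10 w, hz, hw]
      refine ⟨?_, ?_, ?_⟩
      · linear_combination (x ^ 2 + y ^ 2) * h3
      · linear_combination (x ^ 4 + 4 * x ^ 2 * y ^ 2 + y ^ 4) * h3
      · linear_combination (x ^ 10 + 30 * x ^ 8 * y ^ 2 + 140 * x ^ 6 * y ^ 4
          + 140 * x ^ 4 * y ^ 6 + 30 * x ^ 2 * y ^ 8 + y ^ 10) * h3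

open Classical in
lemma ite_sq_eq_sq [CharP F 3] (x y : F) : (if x ^ 2 = y ^ 2 then (1 : ℂ) else 0)
    = (if y = x then 1 else 0) + (if y = -x then 1 else 0)
      - (if x = 0 then 1 else 0) * (if y = 0 then 1 else 0) := by
  have hx : x = -x ↔ x = 0 := by
    constructor
    · intro h
      have : 2 * x = 0 := by linear_combination h
      simpa [two_ne_zero_of_charP_three] using this
    · rintro rfl; simp
  rw [eq_comm (a := x ^ 2), sq_eq_sq_iff_eq_or_eq_neg]
  by_cases h0 : x = 0
  · subst h0; simp
  · by_cases h1 : y = x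
    · subst h1; simp [h0, hx]
    · by_cases h2 : y = -x
      · subst h2; simp [h0, h1]
      · simp [h0, h1, h2]

variable [Fintype F]

open Classical in
lemma sum_ite_sq_eq_sq [CharP F 3] (x : F) :
    ∑ y, (if x ^ 2 = y ^ 2 then (1 : ℂ) else 0) = 2 - if x = 0 then 1 else 0 := by
  simp only [ite_sq_eq_sq, Finset.sum_sub_distrib, Finset.sum_add_distrib, ← Finset.mul_sum,
    Finset.sum_ite_eq', Finset.mem_univ, if_true]
  norm_num

open Classical in
lemma count_add_powers [CharP F 3] : (∑ i : F × F,
      if i.1 ^ 2 + i.2 ^ 2 = 0 ∧ i.1 ^ 4 + i.2 ^ 4 = 0 ∧ i.1 ^ 10 + i.2 ^ 10 = 0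
      then (1 : ℂ) else 0) = 1 := by
  simp [add_powers_eq_zero_iff, Fintype.sum_prod_type, ite_and]

open Classical in
lemma count_sub_powers [CharP F 3] : (∑ i : F × F,
      if i.1 ^ 2 - i.2 ^ 2 = 0 ∧ i.1 ^ 4 - i.2 ^ 4 = 0 ∧ i.1 ^ 10 - i.2 ^ 10 = 0
      then (1 : ℂ) else 0) = 2 * Fintype.card F - 1 := by
  simp only [sub_powers_eq_zero_iff, Fintype.sum_prod_type, sum_ite_sq_eq_sq,
    Finset.sum_sub_distrib, Finset.sum_ite_eq', Finset.mem_univ, if_true]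
  simp [mul_comm]

open Classical in
lemma count_power_sums_sub [CharP F 3] : (∑ i : (F × F) × F × F,
      if i.1.1 ^ 2 + i.1.2 ^ 2 + i.2.1 ^ 2 - i.2.2 ^ 2 = 0
        ∧ i.1.1 ^ 4 + i.1.2 ^ 4 + i.2.1 ^ 4 - i.2.2 ^ 4 = 0
        ∧ i.1.1 ^ 10 + i.1.2 ^ 10 + i.2.1 ^ 10 - i.2.2 ^ 10 = 0
      then (1 : ℂ) else 0) = 10 * Fintype.card F - 9 := by
  let δ (x : F) : ℂ := if x = 0 then 1 else 0
  let σ (x y : F) : ℂ := if x ^ 2 = y ^ 2 then 1 else 0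
  have hind (x y z w : F) : (if x ^ 2 + y ^ 2 + z ^ 2 - w ^ 2 = 0
        ∧ x ^ 4 + y ^ 4 + z ^ 4 - w ^ 4 = 0 ∧ x ^ 10 + y ^ 10 + z ^ 10 - w ^ 10 = 0
      then (1 : ℂ) else 0) = σ x y * σ x z * δ w + δ x * δ y * σ z w + δ x * σ y w * δ z
        + σ x w * δ y * δ z - 3 * (δ x * δ y * δ z * δ w) := by
    simp only [power_sums_sub_eq_zero_iff, δ, σ]
    by_cases hx : x = 0 <;> by_cases hy : y = 0 <;> by_cases hz : z = 0 <;> by_cases hw : w = 0 <;>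
      simp [hx, hy, hz, hw, eq_comm (a := (0 : F)), ← ite_and, and_comm]
    norm_num
  have hσ (x : F) : ∑ y, σ x y = 2 - δ x := sum_ite_sq_eq_sq x
  have hδ : ∑ x, δ x = 1 := by simp [δ]
  have hδδ (x : F) : δ x * δ x = δ x := by simp [δ]
  have hone : ∑ _x : F, (1 : ℂ) = Fintype.card F := by simp
  have hσ2 : ∑ x, (2 - δ x) = 2 * Fintype.card F - 1 := by
    rw [Finset.sum_sub_distrib, hδ, ← hone, Finset.mul_sum]; simp
  have hσ3 : ∑ x, (2 - δ x) * (2 - δ x) = 4 * Fintype.card F - 3 := by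
    have (x : F) : (2 - δ x) * (2 - δ x) = 4 * 1 - 3 * δ x := by linear_combination hδδ x
    simp only [this, Finset.sum_sub_distrib, ← Finset.mul_sum, hδ, hone]; ring
  simp only [hind, Fintype.sum_prod_type, Finset.sum_sub_distrib, Finset.sum_add_distrib,
    ← Finset.mul_sum, ← Finset.sum_mul, hσ, hδ, hσ2, hσ3, mul_one, one_mul]
  ring

open Classical in
lemma sum_ite_pair_eq [CharP F 3] (x y : F) : (∑ i : F × F,
      if (i.1 ^ 2 = (x - y) ^ 2 ∧ i.2 ^ 2 = (x + y) ^ 2)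
        ∨ (i.1 ^ 2 = (x + y) ^ 2 ∧ i.2 ^ 2 = (x - y) ^ 2) then (1 : ℂ) else 0)
    = 8 - 4 * (if x = 0 then 1 else 0) - 4 * (if y = 0 then 1 else 0)
      - 4 * (if y = x then 1 else 0) - 4 * (if y = -x then 1 else 0)
      + 9 * ((if x = 0 then 1 else 0) * (if y = 0 then 1 else 0)) := by
  have h2 := two_ne_zero_of_charP_three (F := F)
  let δ (x : F) : ℂ := if x = 0 then 1 else 0
  let σ (x y : F) : ℂ := if x ^ 2 = y ^ 2 then 1 else 0
  have hσ (a : F) : ∑ z, σ a z = 2 - δ a := sum_ite_sq_eq_sq a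
  have hsq : (x - y) ^ 2 = (x + y) ^ 2 ↔ x = 0 ∨ y = 0 := by
    rw [← mul_eq_zero]
    constructor
    · intro h
      have : 2 * (2 * (x * y)) = 0 := by linear_combination -h
      simpa [h2] using this
    · intro h
      linear_combination -4 * h
  have hind (i : F × F) : (if (i.1 ^ 2 = (x - y) ^ 2 ∧ i.2 ^ 2 = (x + y) ^ 2)
        ∨ (i.1 ^ 2 = (x + y) ^ 2 ∧ i.2 ^ 2 = (x - y) ^ 2) then (1 : ℂ) else 0)
      = σ (x - y) i.1 * σ (x + y) i.2
        + (if x = 0 ∨ y = 0 then 0 else 1) * (σ (x + y) i.1 * σ (x - y) i.2) := by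
    simp only [σ, ← hsq, eq_comm (b := i.1 ^ 2), eq_comm (b := i.2 ^ 2)]
    generalize (x - y) ^ 2 = a, (x + y) ^ 2 = b, i.1 ^ 2 = c, i.2 ^ 2 = d
    by_cases hca : c = a <;> by_cases hcb : c = b <;> by_cases hda : d = a <;>
      by_cases hdb : d = b <;> simp_all
  simp only [hind, Fintype.sum_prod_type, Finset.sum_add_distrib, ← Finset.mul_sum,
    ← Finset.sum_mul, hσ, δ]
  have e1 : x - y = 0 ↔ y = x := by rw [sub_eq_zero, eq_comm]
  have e2 : x + y = 0 ↔ y = -x := by rw [add_comm, add_eq_zero_iff_eq_neg]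
  simp only [e1, e2]
  have hx : x = -x ↔ x = 0 := by
    constructor
    · intro h
      have : 2 * x = 0 := by linear_combination h
      simpa [h2] using this
    · rintro rfl; simp
  by_cases h0 : x = 0
  · subst h0
    by_cases hy : y = 0 <;> simp [hy] <;> norm_num
  · by_cases hy : y = 0
    · subst hy; simp [h0, eq_comm (a := (0 : F))]; norm_num
    · by_cases h1 : y = x
      · subst h1; simp [h0, hx]; norm_num
      · by_cases h2 : y = -x
        · subst h2; simp [h0, h1]; norm_num
        · simp [h0, h1, h2, hy]; norm_num

open Classical in
lemma count_power_sums [CharP F 3] : (∑ i : (F × F) × F × F,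
      if i.1.1 ^ 2 + i.1.2 ^ 2 + i.2.1 ^ 2 + i.2.2 ^ 2 = 0
        ∧ i.1.1 ^ 4 + i.1.2 ^ 4 + i.2.1 ^ 4 + i.2.2 ^ 4 = 0
        ∧ i.1.1 ^ 10 + i.1.2 ^ 10 + i.2.1 ^ 10 + i.2.2 ^ 10 = 0
      then (1 : ℂ) else 0) = 8 * Fintype.card F ^ 2 - 16 * Fintype.card F + 9 := by
  have hinner (d : ℂ) (x : F) : ∑ y : F, (8 - 4 * d - 4 * (if y = 0 then 1 else 0)
      - 4 * (if y = x then 1 else 0) - 4 * (if y = -x then 1 else 0)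
      + 9 * (d * (if y = 0 then 1 else 0)))
      = (8 * Fintype.card F - 12) + (9 - 4 * Fintype.card F) * d := by
    simp only [Finset.sum_sub_distrib, Finset.sum_add_distrib, ← Finset.mul_sum,
      Finset.sum_ite_eq', Finset.mem_univ, if_true, Finset.sum_const, nsmul_eq_mul,
      Finset.card_univ, mul_one]
    ring
  rw [Fintype.sum_prod_type]
  simp only [power_sums_eq_zero_iff, sum_ite_pair_eq]
  rw [Fintype.sum_prod_type]
  refine (Finset.sum_congr rfl fun x _ => hinner (if x = 0 then 1 else 0) x).trans ?_
  simp only [Finset.sum_add_distrib, ← Finset.mul_sum, Finset.sum_ite_eq',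
    Finset.mem_univ, if_true, Finset.sum_const, nsmul_eq_mul, Finset.card_univ]
  ring

end Counting

section ValueDistribution

open Classical in
/-- The indicator of `S ∈ {±v, ±3v, ±9v}`, weighted by `1`, `w ^ 2` and `w ^ 4` respectively. -/
noncomputable def weightedIndicator (v S : ℂ) (w : ℂ) : ℂ :=
  ((if S = 1 * v then 1 else 0) + if S = -1 * v then 1 else 0)
    + w ^ 2 * ((if S = 3 * v then 1 else 0) + if S = -3 * v then 1 else 0)
    + w ^ 4 * ((if S = 9 * v then 1 else 0) + if S = -9 * v then 1 else 0)

lemma mul_add_conj_eq {l : ℕ} {S : ℂ}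
    (hS : (∃ k ≤ 2, S = 3 ^ (l + k) ∨ S = -3 ^ (l + k)) ∨ (starRingEnd ℂ) S = -S) :
    S * (S + (starRingEnd ℂ) S) = 2 * (3 ^ l) ^ 2 * weightedIndicator (3 ^ l) S 3 ∧
    S ^ 3 * (S + (starRingEnd ℂ) S) = 2 * (3 ^ l) ^ 4 * weightedIndicator (3 ^ l) S 9 := by
  have hv : ((3 : ℂ) ^ l) ≠ 0 := pow_ne_zero _ (by norm_num)
  have hconj : (starRingEnd ℂ) ((3 : ℂ) ^ l) = 3 ^ l := by rw [map_pow, map_ofNat]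
  have hS' : (∃ c ∈ ({1, -1, 3, -3, 9, -9} : Set ℝ), S = c * 3 ^ l) ∨ (starRingEnd ℂ) S = -S := by
    refine hS.imp_left ?_
    rintro ⟨k, hk, h | h⟩ <;> interval_cases k
    · exact ⟨1, by simp, by rw [h]; push_cast; ring⟩
    · exact ⟨3, by simp, by rw [h]; push_cast; ring⟩
    · exact ⟨9, by simp, by rw [h]; push_cast; ring⟩
    · exact ⟨-1, by simp, by rw [h]; push_cast; ring⟩
    · exact ⟨-3, by simp, by rw [h]; push_cast; ring⟩
    · exact ⟨-9, by simp, by rw [h]; push_cast; ring⟩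
  clear hS
  generalize (3 : ℂ) ^ l = v at *
  have hcancel (a b : ℂ) : a * v = b * v ↔ a = b := mul_left_inj' hv
  rcases hS' with ⟨c, hc, rfl⟩ | hS
  · rw [map_mul, Complex.conj_ofReal, hconj]
    simp only [weightedIndicator, hcancel]
    simp only [Set.mem_insert_iff, Set.mem_singleton_iff] at hc
    rcases hc with rfl | rfl | rfl | rfl | rfl | rfl <;> push_cast <;> norm_num <;>
      constructor <;> ring
  · have hneg (c : ℝ) (hc : c ≠ 0) : S ≠ c * v := by
      rintro rfl
      rw [map_mul, Complex.conj_ofReal, hconj, eq_neg_iff_add_eq_zero, ← two_mul] at hS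
      simp [hc, hv] at hS
    have h1 := hneg 1 (by norm_num)
    have h2 := hneg (-1) (by norm_num)
    have h3 := hneg 3 (by norm_num)
    have h4 := hneg (-3) (by norm_num)
    have h5 := hneg 9 (by norm_num)
    have h6 := hneg (-9) (by norm_num)
    push_cast at h1 h2 h3 h4 h5 h6
    simp only [weightedIndicator, if_neg h1, if_neg h2, if_neg h3, if_neg h4, if_neg h5, if_neg h6,
      hS]
    constructor <;> ring

variable {F : Type*} [Field F] [Fintype F] {ψ : AddChar F ℂ}

lemma charSum_zero : charSum ψ 0 = Fintype.card F := by
  simp [charSum, ternaryForm]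

open Classical in
lemma sum_weightedIndicator [CharP F 3] {l : ℕ} (hcard : Fintype.card F = 3 ^ (2 * l))
    (hψ : ψ.IsPrimitive) (hfrob : ∀ z, ψ (z ^ 3) = ψ z)
    (hform : ∀ t, ∃ u c : ℤ, charSum ψ t = u + c * (Real.sqrt 3 * I)) :
    ∑ t ∈ ({0}ᶜ : Finset (F × F × F)), weightedIndicator (3 ^ l) (charSum ψ t) 3
      = (3 ^ (2 * l)) ^ 3 - 3 ^ (2 * l) ∧
    ∑ t ∈ ({0}ᶜ : Finset (F × F × F)), weightedIndicator (3 ^ l) (charSum ψ t) 9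
      = 4 * (3 ^ (2 * l)) ^ 2 * (3 ^ (2 * l) - 1) := by
  have hS (t : F × F × F) (ht : t ∈ ({0}ᶜ : Finset (F × F × F))) :=
    mul_add_conj_eq (l := l) (S := charSum ψ t) (by
      obtain ⟨d, hd, hnorm⟩ := exists_charSum_mul_conj hcard hψ hfrob (t := t) (by simpa using ht)
      obtain ⟨u, c, huc⟩ := hform t
      refine (eq_three_pow_or_conj_eq_neg huc hnorm).imp_left ?_
      rintro ⟨k, hk, h⟩
      exact ⟨k - l, by omega, by rwa [show l + (k - l) = k by omega]⟩)
  have m2 : ∑ t, charSum ψ t * (charSum ψ t + (starRingEnd ℂ) (charSum ψ t))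
      = 2 * (Fintype.card F : ℂ) ^ 4 := by
    simp only [mul_add, ← sq, Finset.sum_add_distrib]
    rw [sum_charSum_sq hψ, sum_charSum_mul_conj hψ, count_add_powers, count_sub_powers]
    ring
  have m4 : ∑ t, charSum ψ t ^ 3 * (charSum ψ t + (starRingEnd ℂ) (charSum ψ t))
      = 2 * (Fintype.card F : ℂ) ^ 4 * (4 * Fintype.card F - 3) := by
    simp only [mul_add, ← pow_succ, Finset.sum_add_distrib]
    rw [sum_charSum_pow_four hψ, sum_charSum_cube_mul_conj hψ, count_power_sums,
      count_power_sums_sub]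
    ring
  rw [← Finset.sum_compl_add_sum {0}, Finset.sum_singleton, charSum_zero, Complex.conj_natCast]
    at m2 m4
  rw [Finset.sum_congr rfl fun t ht => (hS t ht).1, ← Finset.mul_sum, hcard] at m2
  rw [Finset.sum_congr rfl fun t ht => (hS t ht).2, ← Finset.mul_sum, hcard] at m4
  push_cast at m2 m4
  have hv : ((3 : ℂ) ^ l) ≠ 0 := pow_ne_zero _ (by norm_num)
  rw [mul_comm 2 l, pow_mul] at m2 m4 ⊢
  generalize (3 : ℂ) ^ l = v at *
  constructor
  · refine mul_left_cancel₀ (mul_ne_zero two_ne_zero (pow_ne_zero 2 hv)) ?_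
    linear_combination m2
  · refine mul_left_cancel₀ (mul_ne_zero two_ne_zero (pow_ne_zero 4 hv)) ?_
    linear_combination m4

end ValueDistribution

lemma nval_even (l i : ℕ) (ε : ℤ) : nval 3 (2 * l) ε (2 * i) = ε * 3 ^ (l + i) := by
  have h : Real.sqrt (((3 : ℕ) : ℝ) ^ (2 * l + 2 * i)) = 3 ^ (l + i) := by
    rw [show ((3 : ℕ) : ℝ) ^ (2 * l + 2 * i) = (3 ^ (l + i)) ^ 2 by push_cast; ring]
    exact Real.sqrt_sq (by positivity)
  rw [nval, if_pos (by omega), h]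
  push_cast; rfl

section GaloisFieldCharacter

variable [Fact (Nat.Prime 3)]

/-- The canonical additive character of `GaloisField 3 m`. -/
noncomputable def traceChar (m : ℕ) : AddChar (GaloisField 3 m) ℂ :=
  (ZMod.stdAddChar (N := 3)).compAddMonoidHom
    (Algebra.trace (ZMod 3) (GaloisField 3 m)).toAddMonoidHom

lemma traceChar_apply (m : ℕ) (x : GaloisField 3 m) :
    traceChar m x = zetaPow 3 (Algebra.trace (ZMod 3) (GaloisField 3 m) x) := by
  have h (a : ZMod 3) : ZMod.stdAddChar a = zetaPow 3 a := by
    have := ZMod.stdAddChar_coe (N := 3) (a.val : ℤ)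
    simpa [zetaPow] using this
  exact h _

lemma traceChar_isPrimitive (m : ℕ) : (traceChar m).IsPrimitive := by
  refine AddChar.IsPrimitive.of_ne_one fun h => ?_
  obtain ⟨x, hx⟩ := Algebra.trace_surjective (ZMod 3) (GaloisField 3 m) 1
  have h1 : ZMod.stdAddChar (1 : ZMod 3) = ZMod.stdAddChar (0 : ZMod 3) := by
    have := DFunLike.congr_fun h x
    rw [AddChar.map_zero_eq_one, ← hx]
    exact this
  exact one_ne_zero (ZMod.injective_stdAddChar h1)

lemma traceChar_cube (m : ℕ) (z : GaloisField 3 m) : traceChar m (z ^ 3) = traceChar m z := by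
  rw [traceChar_apply, traceChar_apply]
  congr 1
  have := Algebra.trace_eq_of_algEquiv
    (FiniteField.frobeniusAlgEquivOfAlgebraic (ZMod 3) (GaloisField 3 m)) z
  simpa [ZMod.card] using this

lemma expSum_eq_charSum (m : ℕ) [Fintype (GaloisField 3 m)]
    (t : GaloisField 3 m × GaloisField 3 m × GaloisField 3 m) :
    expSum 3 m t.1 t.2.1 t.2.2 = charSum (traceChar m) t := by
  simp only [expSum, charSum, traceChar_apply, ternaryForm]
  refine Finset.sum_congr ?_ fun _ _ => rfl
  ext; simp

end GaloisFieldCharacter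

section GaloisFieldCounts

variable [Fact (Nat.Prime 3)]

lemma exists_charSum_traceChar_eq (m : ℕ) [Fintype (GaloisField 3 m)]
    (t : GaloisField 3 m × GaloisField 3 m × GaloisField 3 m) :
    ∃ u c : ℤ, charSum (traceChar m) t = u + c * (Real.sqrt 3 * I) := by
  simp only [charSum, traceChar_apply]
  exact exists_sum_zetaPow_eq two_ne_zero_of_charP_three _ (by simp [ternaryForm_zero])
    (by simp [ternaryForm_neg])

open Classical in
lemma nn_eq_sum (l i : ℕ) [Fintype (GaloisField 3 (2 * l))] (ε : ℤ) :
    (nn 3 (2 * l) ε (2 * i) : ℂ) = ∑ t ∈ ({0}ᶜ : Finset (GaloisField 3 (2 * l)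
      × GaloisField 3 (2 * l) × GaloisField 3 (2 * l))),
        if charSum (traceChar (2 * l)) t = ε * 3 ^ i * 3 ^ l then (1 : ℂ) else 0 := by
  rw [← Finset.sum_filter, Finset.sum_const, nsmul_eq_mul, mul_one, nn, ← Set.ncard_coe_finset]
  congr 2
  ext t
  simp only [Set.mem_ofPred_eq, expSum_eq_charSum, nval_even, Finset.coe_filter, Finset.mem_compl,
    Finset.mem_singleton, pow_add, mul_assoc, mul_comm ((3 : ℂ) ^ l)]
  rfl

lemma nn_moments (l : ℕ) (hl : l ≠ 0) :
    ((nn 3 (2 * l) 1 0 : ℝ) + nn 3 (2 * l) (-1) 0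
        + 3 ^ 2 * ((nn 3 (2 * l) 1 2 : ℝ) + nn 3 (2 * l) (-1) 2)
        + 3 ^ 4 * ((nn 3 (2 * l) 1 4 : ℝ) + nn 3 (2 * l) (-1) 4)
      = (3 ^ (2 * l)) ^ 3 - 3 ^ (2 * l)) ∧
    ((nn 3 (2 * l) 1 0 : ℝ) + nn 3 (2 * l) (-1) 0
        + 3 ^ 4 * ((nn 3 (2 * l) 1 2 : ℝ) + nn 3 (2 * l) (-1) 2)
        + 3 ^ 8 * ((nn 3 (2 * l) 1 4 : ℝ) + nn 3 (2 * l) (-1) 4)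
      = 4 * (3 ^ (2 * l)) ^ 2 * (3 ^ (2 * l) - 1)) := by
  let : Fintype (GaloisField 3 (2 * l)) := Fintype.ofFinite _
  have hcard : Fintype.card (GaloisField 3 (2 * l)) = 3 ^ (2 * l) := by
    rw [← Nat.card_eq_fintype_card, GaloisField.card 3 _ (by omega)]
  obtain ⟨h2, h4⟩ := sum_weightedIndicator hcard (traceChar_isPrimitive _) (traceChar_cube _)
    (exists_charSum_traceChar_eq _)
  have e (i : ℕ) (ε : ℤ) := nn_eq_sum l i ε
  have e10 := e 0 1
  have e11 := e 0 (-1)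
  have e20 := e 1 1
  have e21 := e 1 (-1)
  have e30 := e 2 1
  have e31 := e 2 (-1)
  norm_num only [Int.cast_one, Int.cast_neg] at e10 e11 e20 e21 e30 e31
  simp only [weightedIndicator, Finset.sum_add_distrib, ← Finset.mul_sum, neg_mul, one_mul] at h2 h4
  simp only [neg_mul, one_mul] at e10 e11 e20 e21 e30 e31
  rw [← e10, ← e11, ← e20, ← e21, ← e30, ← e31] at h2 h4
  norm_num only at h2 h4 ⊢
  exact ⟨by exact_mod_cast h2, by exact_mod_cast h4⟩

end GaloisFieldCounts

theorem macwilliams_identities (m : ℕ) (hme : Even m) (hm6 : 6 ≤ m) :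
    letI : Fact (Nat.Prime 3) := ⟨by norm_num⟩
    let p : ℝ := 3
    let A2 : ℝ := p ^ m - 1
    let A4 : ℝ := (p ^ m - 1) * (2 * p ^ m - p - 3) / 3 + (p ^ m - 1) * (p ^ m - 3) / 2
    let a : ℝ := (p ^ (3 * m - 2) * ((p ^ m - 1) * (p ^ m - 2) * (p - 1) ^ 2 + 2 * A2)
        - p ^ (2 * (m - 1)) * (p - 1) ^ 2 * (p ^ (3 * m) - 2 * p ^ (2 * m) + 1)
        + (p - 1) * (p ^ m - 1) * p ^ (3 * m - 1)) / ((p - 1) ^ 2 * p ^ (m - 2))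
    let b : ℝ := (p ^ (3 * m - 4) *
          ((p ^ m - 1) * (p ^ m - 2) * (p ^ m - 3) * (p ^ m - 4) * (p - 1) ^ 4
            + 12 * A2 * (p ^ m - 3) * (p ^ m - 4) * (p - 1) ^ 2 + 24 * A4)
        - (p - 1) ^ 5 * p ^ (3 * (m - 1)) * a
        - p ^ (4 * (m - 1)) * (p - 1) ^ 4 *
            (p ^ (3 * m) - 4 * p ^ (2 * m) - 16 * p ^ m + 19)
        + 6 * ((p - 1) ^ 3 * p ^ (2 * (m - 1)) * a
            + p ^ (3 * (m - 1)) * (p - 1) ^ 3 *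
                (p ^ (3 * m) - p ^ (2 * m + 1) - 4 * p ^ m + 6))
        - 11 * ((p - 1) ^ 2 * p ^ (m - 2) * a
            + p ^ (2 * (m - 1)) * (p - 1) ^ 2 * (p ^ (3 * m) - 2 * p ^ (2 * m) + 1))
        + 6 * ((p - 1) * (p ^ m - 1) * p ^ (3 * m - 1))) / ((p - 1) ^ 4 * p ^ (2 * m - 4))
    ((nn 3 m 1 0 : ℝ) + nn 3 m (-1) 0 + p ^ 2 * ((nn 3 m 1 2 : ℝ) + nn 3 m (-1) 2)
        + p ^ 4 * ((nn 3 m 1 4 : ℝ) + nn 3 m (-1) 4) = a) ∧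
    ((nn 3 m 1 0 : ℝ) + nn 3 m (-1) 0 + p ^ 4 * ((nn 3 m 1 2 : ℝ) + nn 3 m (-1) 2)
        + p ^ 8 * ((nn 3 m 1 4 : ℝ) + nn 3 m (-1) 4) = b) := by
  intro p A2 A4 a b
  obtain ⟨l, rfl⟩ := even_iff_exists_two_mul.1 hme
  have hp : p = 3 := rfl
  obtain ⟨h2, h4⟩ := @nn_moments ⟨by norm_num⟩ l (by omega)
  obtain ⟨n, rfl⟩ : ∃ n, l = n + 3 := ⟨l - 3, by omega⟩
  have e1 : 3 * (2 * (n + 3)) - 2 = 6 * n + 16 := by omega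
  have e2 : 2 * (2 * (n + 3) - 1) = 4 * n + 10 := by omega
  have e3 : 3 * (2 * (n + 3)) - 1 = 6 * n + 17 := by omega
  have e4 : 2 * (n + 3) - 2 = 2 * n + 4 := by omega
  have e5 : 3 * (2 * (n + 3)) - 4 = 6 * n + 14 := by omega
  have e6 : 3 * (2 * (n + 3) - 1) = 6 * n + 15 := by omega
  have e7 : 4 * (2 * (n + 3) - 1) = 8 * n + 20 := by omega
  have e8 : 2 * (2 * (n + 3)) - 4 = 4 * n + 8 := by omega
  have ha : a = (3 ^ (2 * (n + 3))) ^ 3 - 3 ^ (2 * (n + 3)) := by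
    simp only [a, A2, hp, e1, e2, e3, e4]
    rw [div_eq_iff (by positivity)]
    ring
  have hb : b = 4 * (3 ^ (2 * (n + 3))) ^ 2 * (3 ^ (2 * (n + 3)) - 1) := by
    simp only [b, A2, A4, ha, hp, e2, e3, e4, e5, e6, e7, e8]
    rw [div_eq_iff (by positivity)]
    ring
  rw [ha, hb]
  exact ⟨h2, h4⟩
end
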